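/- There are polynomials P_{0,b,N} (1 ≤ b ≤ r) with coefficients uniformly bounded in N such that for every r ≥ 1 the following holds: if δ > 0 is small enough, then uniformly in k ∈ ℤ, ∫_{−δ}^{δ} e^{−itk} E(e^{itS_N}) dt = Σ_{b=1}^{r} σ_N^{−b} P_{0,b,N}((k − a_N)/σ_N) 𝔤((k − a_N)/σ_N) + o(σ_N^{−r}), where a_N = E(S_N) and 𝔤(u) = (2π)^{−1/2} e^{−u²/2}. -/

import Mathlib

open MeasureTheory ProbabilityTheory Filter Finset
open scoped ENNReal Topology

noncomputable section

namespace EdgeworthMC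

variable {Ω E : Type*} [MeasurableSpace Ω] [MeasurableSpace E]

/-- The standard Gaussian density `𝔤(u) = (2π)^{-1/2} e^{-u²/2}`. -/
def gaussDensity (u : ℝ) : ℝ := (Real.sqrt (2 * Real.pi))⁻¹ * Real.exp (-u ^ 2 / 2)

/-- `UEChain μ X κ C` : the process `X` is a Markov chain (with respect to the probability
measure `μ`) with transition kernels `κ n` from the state at time `n` to the state at time
`n+1`, and the chain is uniformly elliptic with ellipticity constant `C`:
`C⁻¹ ℙ(X_{n+1} ∈ A) ≤ ℙ(X_{n+1} ∈ A | X_n = x) ≤ C ℙ(X_{n+1} ∈ A)` for a.e. `x`. -/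
def UEChain (μ : Measure Ω) (X : ℕ → Ω → E) (κ : ℕ → Kernel E E) (C : ℝ) : Prop :=
  IsProbabilityMeasure μ ∧
  (∀ n, Measurable (X n)) ∧
  (∀ n, IsMarkovKernel (κ n)) ∧
  (∀ n (A : Set E), MeasurableSet A →
      (μ[fun ω => A.indicator (fun _ => (1 : ℝ)) (X (n + 1) ω) |
          ⨆ i : Fin (n + 1), MeasurableSpace.comap (X i) (inferInstance : MeasurableSpace E)]
        =ᵐ[μ] fun ω => (κ n (X n ω) A).toReal)) ∧
  (∀ n (A : Set E), MeasurableSet A → ∀ᵐ ω ∂μ,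
      κ n (X n ω) A ≤ ENNReal.ofReal C * Measure.map (X (n + 1)) μ A ∧
      Measure.map (X (n + 1)) μ A ≤ ENNReal.ofReal C * κ n (X n ω) A)

/-- Partial sums `S_N = ∑_{n=1}^N f_n(X_n)`. -/
def S (X : ℕ → Ω → E) (f : ℕ → E → ℤ) (N : ℕ) (ω : Ω) : ℤ :=
  ∑ n ∈ Finset.Icc 1 N, f n (X n ω)

/-- `V_N = Var(S_N)`. -/
def VN (μ : Measure Ω) (X : ℕ → Ω → E) (f : ℕ → E → ℤ) (N : ℕ) : ℝ :=
  variance (fun ω => ((S X f N ω : ℝ))) μ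

/-- `σ_N = √V_N`. -/
def sigN (μ : Measure Ω) (X : ℕ → Ω → E) (f : ℕ → E → ℤ) (N : ℕ) : ℝ :=
  Real.sqrt (VN μ X f N)

/-- `a_N = 𝔼(S_N)`. -/
def meanS (μ : Measure Ω) (X : ℕ → Ω → E) (f : ℕ → E → ℤ) (N : ℕ) : ℝ :=
  ∫ ω, ((S X f N ω : ℝ)) ∂μ

/-- The second largest value among the (finitely many) values of `p`, counted with
multiplicity: it equals `min_j max_{j' ≠ j} p j'`. -/
def secondLargest {ι : Type*} (p : ι → ℝ) : ℝ := ⨅ j, sSup (p '' {j}ᶜ)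

/-- `q_n(m)` : the second largest value among `ℙ(Y_n ≡ j mod m)`, `j = 0,…,m-1`. -/
def qres (μ : Measure Ω) (X : ℕ → Ω → E) (f : ℕ → E → ℤ) (n m : ℕ) : ℝ :=
  secondLargest (fun j : ZMod m => (μ {ω | ((f n (X n ω) : ZMod m)) = j}).toReal)

/-- `M_N = min_{2 ≤ m ≤ 2K} ∑_{n=1}^N q_n(m)`. -/
def MN (μ : Measure Ω) (X : ℕ → Ω → E) (f : ℕ → E → ℤ) (K N : ℕ) : ℝ :=
  sInf ((fun m => ∑ n ∈ Finset.Icc 1 N, qres μ X f n m) '' (Set.Icc 2 (2 * K)))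

/-- `S_N` obeys the Edgeworth expansion of order `r` : there are polynomials `P_{b,N}`,
with coefficients uniformly bounded in `N` and degrees not depending on `N`, such that
uniformly in `k ∈ ℤ`,
`ℙ(S_N = k) = ∑_{b=1}^r σ_N^{-b} P_{b,N}(k_N) 𝔤(k_N) + o(σ_N^{-r})`
where `k_N = (k - 𝔼 S_N)/σ_N`. -/
def Edgeworth (μ : Measure Ω) (X : ℕ → Ω → E) (f : ℕ → E → ℤ) (r : ℕ) : Prop :=
  ∃ (D : ℕ) (Cb : ℝ) (P : ℕ → ℕ → Polynomial ℝ),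
    (∀ b N, (P b N).natDegree ≤ D) ∧
    (∀ b N i, |(P b N).coeff i| ≤ Cb) ∧
    ∀ ε > 0, ∃ N₀, ∀ N ≥ N₀, ∀ k : ℤ,
      |(μ {ω | S X f N ω = k}).toReal -
          ∑ b ∈ Finset.Icc 1 r, (sigN μ X f N)⁻¹ ^ b *
            (P b N).eval (((k : ℝ) - meanS μ X f N) / sigN μ X f N) *
            gaussDensity (((k : ℝ) - meanS μ X f N) / sigN μ X f N)|
        ≤ ε * (sigN μ X f N)⁻¹ ^ r

/-- The σ-algebra generated by `X_{j 1}, …, X_{j ℓ}`. -/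
def sigmaOf (X : ℕ → Ω → E) {ℓ : ℕ} (j : Fin ℓ → ℕ) : MeasurableSpace Ω :=
  ⨆ i : Fin ℓ, MeasurableSpace.comap (X (j i)) (inferInstance : MeasurableSpace E)

/-- Conditional probability of the event `s` given the σ-algebra `m`. -/
def condProb (μ : Measure Ω) (m : MeasurableSpace Ω) (s : Set Ω) : Ω → ℝ :=
  μ[s.indicator (fun _ => (1 : ℝ)) | m]

/-- `S_N` obeys the Edgeworth expansion of order `r` in a conditionally stable way:
for every `ℓ`, the order `r` Edgeworth expansion holds for the conditional law of `S_N`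
given `X_{j_1},…,X_{j_ℓ}`, with error term `o_ℓ(σ_N^{-r})` and polynomial coefficient
bounds depending only on `ℓ` (and `r`), uniformly over all choices of indices
`1 ≤ j_1,…,j_ℓ ≤ N`. -/
def CondStableEdgeworth (μ : Measure Ω) (X : ℕ → Ω → E) (f : ℕ → E → ℤ) (r : ℕ) : Prop :=
  ∀ ℓ : ℕ, ∃ (D : ℕ) (Cb : ℝ), ∀ ε > 0, ∃ N₀, ∀ N ≥ N₀,
    ∀ j : Fin ℓ → ℕ, (∀ i, j i ∈ Finset.Icc 1 N) →
      ∃ P : ℕ → Ω → Polynomial ℝ,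
        (∀ b ω, (P b ω).natDegree ≤ D) ∧
        (∀ b ω i, |(P b ω).coeff i| ≤ Cb) ∧
        ∀ᵐ ω ∂μ, ∀ k : ℤ,
          |condProb μ (sigmaOf X j) {ω' | S X f N ω' = k} ω -
              ∑ b ∈ Finset.Icc 1 r, (sigN μ X f N)⁻¹ ^ b *
                (P b ω).eval (((k : ℝ) -
                    (μ[fun ω' => ((S X f N ω' : ℝ)) | sigmaOf X j]) ω) / sigN μ X f N) *
                gaussDensity (((k : ℝ) -
                    (μ[fun ω' => ((S X f N ω' : ℝ)) | sigmaOf X j]) ω) / sigN μ X f N)|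
            ≤ ε * (sigN μ X f N)⁻¹ ^ r

/-- `t` is a resonant point: `t = 2πl/m` with `0 < m ≤ 2K`, `0 ≤ l < m`. -/
def IsResonant (K : ℕ) (t : ℝ) : Prop :=
  ∃ l m : ℕ, 0 < m ∧ m ≤ 2 * K ∧ l < m ∧ t = 2 * Real.pi * l / m

/-- The conditional characteristic function `𝔼[e^{itS_N} | X_{j_1},…,X_{j_ℓ}]`. -/
def condChar (μ : Measure Ω) (X : ℕ → Ω → E) (f : ℕ → E → ℤ) (t : ℝ) (N : ℕ)
    {ℓ : ℕ} (j : Fin ℓ → ℕ) : Ω → ℂ :=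
  μ[fun ω => Complex.exp (Complex.I * (t : ℂ) * ((S X f N ω : ℤ) : ℂ)) | sigmaOf X j]

end EdgeworthMC

namespace EdgeworthMC

variable {Ω E : Type*} [MeasurableSpace Ω] [MeasurableSpace E]

/-- The remainder of order `n` in the Taylor expansion of `G` at `0`, divided by `z ^ n`. -/
def taylorQuotient (G : ℂ → ℂ) : ℕ → ℂ → ℂ
  | 0 => G
  | n + 1 => dslope (taylorQuotient G n) 0

lemma taylorQuotient_expansion (G : ℂ → ℂ) (n : ℕ) (z : ℂ) :
    G z = ∑ l ∈ range n, taylorQuotient G l 0 * z ^ l + z ^ n * taylorQuotient G n z := by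
  induction n with
  | zero => simp [taylorQuotient]
  | succ n ih =>
    have h := sub_smul_dslope (taylorQuotient G n) 0 z
    simp only [sub_zero, smul_eq_mul] at h
    rw [sum_range_succ, taylorQuotient, ih]
    linear_combination -z ^ n * h

lemma taylorQuotient_bound {ρ B : ℝ} (hρ : 0 < ρ) {G : ℂ → ℂ}
    (hd : DifferentiableOn ℂ G (Metric.ball 0 ρ)) (hB : ∀ z ∈ Metric.ball (0 : ℂ) ρ, ‖G z‖ ≤ B)
    (n : ℕ) :
    DifferentiableOn ℂ (taylorQuotient G n) (Metric.ball 0 ρ) ∧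
      ∀ z ∈ Metric.ball (0 : ℂ) ρ, ‖taylorQuotient G n z‖ ≤ B * (2 / ρ) ^ n := by
  induction n with
  | zero => exact ⟨hd, by simpa [taylorQuotient] using hB⟩
  | succ n ih =>
    obtain ⟨ihd, ihB⟩ := ih
    have h0 : (0 : ℂ) ∈ Metric.ball (0 : ℂ) ρ := Metric.mem_ball_self hρ
    refine ⟨(Complex.differentiableOn_dslope (Metric.isOpen_ball.mem_nhds h0)).2 ihd,
      fun z hz => ?_⟩
    have := Complex.norm_dslope_le_div_of_mapsTo_ball (R₂ := 2 * (B * (2 / ρ) ^ n)) ihd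
      (fun w hw => by
        rw [mem_closedBall_iff_norm]
        calc _ ≤ ‖taylorQuotient G n w‖ + ‖taylorQuotient G n 0‖ := norm_sub_le _ _
          _ ≤ _ := by linarith [ihB w hw, ihB 0 h0]) hz
    calc _ ≤ _ := this
      _ = _ := by rw [pow_succ]; ring

/-- If `exp Λ` is a holomorphic function with first derivative at `0` equal to `0` and
second derivative `V`, and `Λ 0 = 0`, then `Λ z = V z² / 2 + O(z³)`. -/
lemma log_expansion {ρ V : ℝ} (hρ : 0 < ρ) {L φ φ₁ : ℂ → ℂ}
    (hL : DifferentiableOn ℂ L (Metric.ball 0 ρ)) (hL0 : L 0 = 0)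
    (hexp : ∀ z ∈ Metric.ball (0 : ℂ) ρ, Complex.exp (L z) = φ z)
    (hφ : ∀ z, HasDerivAt φ (φ₁ z) z) (hφ₁0 : φ₁ 0 = 0) (hφ₁ : HasDerivAt φ₁ V 0) (z : ℂ) :
    L z = V * z ^ 2 / 2 + z ^ 3 * taylorQuotient L 3 z := by
  have h0 : (0 : ℂ) ∈ Metric.ball (0 : ℂ) ρ := Metric.mem_ball_self hρ
  have hnhds : Metric.ball (0 : ℂ) ρ ∈ 𝓝 0 := Metric.isOpen_ball.mem_nhds h0
  have hd1 : DifferentiableOn ℂ (taylorQuotient L 1) (Metric.ball 0 ρ) :=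
    (Complex.differentiableOn_dslope hnhds).2 hL
  have hd2 : DifferentiableOn ℂ (taylorQuotient L 2) (Metric.ball 0 ρ) :=
    (Complex.differentiableOn_dslope hnhds).2 hd1
  have hφ0 : φ 0 = 1 := by rw [← hexp 0 h0, hL0, Complex.exp_zero]
  have hexp' : φ =ᶠ[𝓝 0] fun z => Complex.exp (L z) :=
    eventually_of_mem hnhds fun z hz => (hexp z hz).symm
  have ha1 : taylorQuotient L 1 0 = 0 := by
    have h1 : HasDerivAt (fun z => Complex.exp (L z)) (Complex.exp (L 0) * deriv L 0) 0 :=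
      ((hL.differentiableAt hnhds).hasDerivAt).cexp
    have h2 := (hφ 0).unique (h1.congr_of_eventuallyEq hexp')
    rw [hL0, Complex.exp_zero, one_mul, hφ₁0] at h2
    simp [taylorQuotient, ← h2]
  have hL2 : ∀ z, L z = z ^ 2 * taylorQuotient L 2 z := fun z => by
    have := taylorQuotient_expansion L 2 z
    simpa [sum_range_succ, ha1, show taylorQuotient L 0 0 = 0 from hL0] using this
  set A := taylorQuotient L 2 with hA
  have hφ₁' : φ₁ =ᶠ[𝓝 0] fun z => z * (φ z * (2 * A z + z * deriv A z)) := by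
    filter_upwards [eventually_eventually_nhds.2 (Metric.isOpen_ball.mem_nhds h0)] with z hz
    have hzb : z ∈ Metric.ball (0 : ℂ) ρ := hz.self_of_nhds
    have h1 : HasDerivAt L (2 * z * A z + z ^ 2 * deriv A z) z := by
      have h := (hasDerivAt_pow 2 z).mul ((hd2.differentiableAt hz).hasDerivAt)
      have h' : L = (fun z => z ^ 2) * A := funext hL2
      rw [h']
      simpa using h
    have h2 := (hφ z).unique (h1.cexp.congr_of_eventuallyEq
      (by filter_upwards [hz] with w hw using (hexp w hw).symm))
    rw [h2, hexp z hzb]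
    ring
  have hdA : DifferentiableAt ℂ (deriv A) 0 :=
    (hd2.deriv Metric.isOpen_ball).differentiableAt hnhds
  have hk : DifferentiableAt ℂ (fun z => φ z * (2 * A z + z * deriv A z)) 0 :=
    (hφ 0).differentiableAt.mul (((hd2.differentiableAt hnhds).const_mul 2).add
      (differentiableAt_id.mul hdA))
  have h3 := (hasDerivAt_id (0 : ℂ)).mul hk.hasDerivAt
  have h4 := hφ₁.unique (h3.congr_of_eventuallyEq hφ₁')
  simp only [id, one_mul, zero_mul, add_zero, hφ0] at h4
  have h5 := taylorQuotient_expansion L 3 z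
  rw [sum_range_succ, sum_range_succ, sum_range_one, ha1, show taylorQuotient L 0 0 = 0 from hL0,
    ← hA] at h5
  rw [h5, h4]
  ring
lemma integrable_pow_mul_exp_neg_mul_sq {b : ℝ} (hb : 0 < b) (j : ℕ) :
    Integrable fun u : ℝ => u ^ j * Real.exp (-b * u ^ 2) := by
  simpa using integrable_rpow_mul_exp_neg_mul_sq hb (s := j) (by linarith [j.cast_nonneg (α := ℝ)])

lemma integrable_one_add_abs_pow_mul_exp {b : ℝ} (hb : 0 < b) (j : ℕ) :
    Integrable fun u : ℝ => (1 + |u|) ^ j * Real.exp (-b * u ^ 2) := by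
  have h : (fun u : ℝ => (1 + |u|) ^ j * Real.exp (-b * u ^ 2)) = fun u =>
      ∑ i ∈ range (j + 1), (j.choose i : ℝ) * |u ^ (j - i) * Real.exp (-b * u ^ 2)| := by
    ext u
    rw [add_pow, sum_mul]
    refine sum_congr rfl fun i _ => ?_
    rw [abs_mul, abs_pow, abs_of_pos (Real.exp_pos _)]
    ring
  rw [h]
  exact integrable_finsetSum _ fun i _ =>
    (integrable_pow_mul_exp_neg_mul_sq hb _).abs.const_mul _

/-- The integrand of the Fourier transform of `u ^ j e^{-u²/2}`. -/
def gaussMonomial (j : ℕ) (x u : ℝ) : ℂ :=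
  (u : ℂ) ^ j * Complex.exp (-(Complex.I * u * x) - (u : ℂ) ^ 2 / 2)

lemma norm_cexp_gauss (x u : ℝ) :
    ‖Complex.exp (-(Complex.I * u * x) - (u : ℂ) ^ 2 / 2)‖ = Real.exp (-u ^ 2 / 2) := by
  rw [Complex.norm_exp]
  congr 1
  have : (u : ℂ) ^ 2 / 2 = ((u ^ 2 / 2 : ℝ) : ℂ) := by push_cast; ring
  rw [this, Complex.sub_re, Complex.ofReal_re]
  simp
  ring

lemma continuous_gaussMonomial (j : ℕ) (x : ℝ) : Continuous (gaussMonomial j x) := by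
  unfold gaussMonomial; fun_prop

lemma integrable_gaussMonomial (j : ℕ) (x : ℝ) : Integrable (gaussMonomial j x) := by
  refine (integrable_pow_mul_exp_neg_mul_sq (b := 1 / 2) (by norm_num) j).mono
    (continuous_gaussMonomial j x).aestronglyMeasurable (.of_forall fun u => ?_)
  rw [gaussMonomial, norm_mul, norm_cexp_gauss, norm_mul, norm_pow, Complex.norm_real,
    norm_pow, Real.norm_of_nonneg (Real.exp_pos _).le]
  apply le_of_eq
  congr 2
  ring

lemma integral_gaussMonomial_zero (x : ℝ) :
    ∫ u, gaussMonomial 0 x u = (2 * Real.pi * gaussDensity x : ℝ) := by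
  have h := fourierIntegral_gaussian (b := 1 / 2) (by norm_num) (-x)
  have h1 : ∀ u : ℝ, gaussMonomial 0 x u =
      Complex.exp (Complex.I * -x * u) * Complex.exp (-(1 / 2) * (u : ℂ) ^ 2) := fun u => by
    rw [gaussMonomial, pow_zero, one_mul, ← Complex.exp_add]
    congr 1
    ring
  simp_rw [h1, h, gaussDensity]
  have h2 : ((Real.pi : ℂ) / (1 / 2)) ^ (1 / 2 : ℂ) = (Real.sqrt (2 * Real.pi) : ℝ) := by
    rw [Real.sqrt_eq_rpow, Complex.ofReal_cpow (by positivity)]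
    push_cast
    congr 1
    ring
  have h3 : 2 * Real.pi * ((Real.sqrt (2 * Real.pi))⁻¹ * Real.exp (-x ^ 2 / 2)) =
      Real.sqrt (2 * Real.pi) * Real.exp (-x ^ 2 / 2) := by
    have hp : 0 < Real.sqrt (2 * Real.pi) := Real.sqrt_pos.2 (by positivity)
    have hs := Real.mul_self_sqrt (show 0 ≤ 2 * Real.pi by positivity)
    field_simp
    nlinarith [Real.exp_pos (-x ^ 2 / 2)]
  rw [h2, h3]
  push_cast
  congr 2
  ring

lemma integral_gaussMonomial_succ (j : ℕ) (x : ℝ) :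
    ∫ u, gaussMonomial (j + 1) x u =
      j * (∫ u, gaussMonomial (j - 1) x u) - Complex.I * x * ∫ u, gaussMonomial j x u := by
  have hd : ∀ u : ℝ, HasDerivAt (gaussMonomial j x)
      (j * gaussMonomial (j - 1) x u - Complex.I * x * gaussMonomial j x u
        - gaussMonomial (j + 1) x u) u := fun u => by
    have h1 : HasDerivAt (fun u : ℂ => u ^ j * Complex.exp (-(Complex.I * u * x) - u ^ 2 / 2))
        (j * (u : ℂ) ^ (j - 1) * Complex.exp (-(Complex.I * u * x) - (u : ℂ) ^ 2 / 2) +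
          (u : ℂ) ^ j * (Complex.exp (-(Complex.I * u * x) - (u : ℂ) ^ 2 / 2) *
            (-(Complex.I * 1 * x) - (2 : ℕ) * (u : ℂ) ^ (2 - 1) * 1 / 2))) (u : ℂ) := by
      refine (hasDerivAt_pow j (u : ℂ)).mul (HasDerivAt.cexp ?_)
      exact ((((hasDerivAt_id (u : ℂ)).const_mul Complex.I).mul_const (x : ℂ)).neg).sub
        (((hasDerivAt_id (u : ℂ)).pow 2).div_const 2)
    refine h1.comp_ofReal.congr_deriv ?_
    simp only [gaussMonomial, pow_succ]
    push_cast
    ring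
  have hi := fun j => integrable_gaussMonomial j x
  have h := integral_eq_zero_of_hasDerivAt_of_integrable hd
    ((((hi (j - 1)).const_mul _).sub ((hi j).const_mul _)).sub (hi (j + 1))) (hi j)
  rw [integral_sub (by exact ((hi (j - 1)).const_mul _).sub ((hi j).const_mul _)) (hi (j + 1)),
    integral_sub ((hi (j - 1)).const_mul _) ((hi j).const_mul _), integral_const_mul,
    integral_const_mul] at h
  linear_combination -h

lemma exists_hermite (j : ℕ) : ∃ H : Polynomial ℂ, ∀ x : ℝ,
    ∫ u, gaussMonomial j x u = H.eval (x : ℂ) * gaussDensity x := by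
  have key : ∀ j, (∃ H : Polynomial ℂ, ∀ x : ℝ,
      ∫ u, gaussMonomial j x u = H.eval (x : ℂ) * gaussDensity x) ∧
      ∃ H : Polynomial ℂ, ∀ x : ℝ,
        ∫ u, gaussMonomial (j - 1) x u = H.eval (x : ℂ) * gaussDensity x := by
    intro j
    induction j with
    | zero =>
      have : ∃ H : Polynomial ℂ, ∀ x : ℝ,
          ∫ u, gaussMonomial 0 x u = H.eval (x : ℂ) * gaussDensity x :=
        ⟨.C (2 * Real.pi : ℝ), fun x => by
          rw [integral_gaussMonomial_zero, Polynomial.eval_C]; push_cast; ring⟩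
      exact ⟨this, this⟩
    | succ j ih =>
      refine ⟨?_, ih.1⟩
      obtain ⟨⟨H, hH⟩, H', hH'⟩ := ih
      refine ⟨.C (j : ℂ) * H' - .C Complex.I * .X * H, fun x => ?_⟩
      rw [integral_gaussMonomial_succ, hH, hH']
      simp only [Polynomial.eval_sub, Polynomial.eval_mul, Polynomial.eval_C, Polynomial.eval_X]
      ring
  exact (key j).1

/-- Up to a constant, the `j`-th Hermite polynomial: the Fourier transform of `u ^ j e^{-u²/2}`
divided by the Gaussian density. -/
def hermitePoly (j : ℕ) : Polynomial ℂ := (exists_hermite j).choose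

lemma integral_gaussMonomial (j : ℕ) (x : ℝ) :
    ∫ u, gaussMonomial j x u = (hermitePoly j).eval (x : ℂ) * gaussDensity x :=
  (exists_hermite j).choose_spec x

/-- The coefficients of the double expansion of `exp (s * q ζ)` in powers `s ^ m * ζ ^ l`. -/
def edgeCoeff (q : ℂ → ℂ) (m l : ℕ) : ℂ :=
  taylorQuotient (fun z => q z ^ m) l 0 / (m.factorial : ℂ)

/-- The truncated expansion of `exp (w (iu)³ q(iuw))` in powers of `w`. -/
def edgeSum (q : ℂ → ℂ) (r : ℕ) (w u : ℝ) : ℂ :=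
  ∑ m ∈ range r, ∑ l ∈ range (r - m),
    edgeCoeff q m l * (w : ℂ) ^ (m + l) * (Complex.I * u) ^ (3 * m + l)

/-- The polynomial multiplying `σ ^ (-(b + 1))` in the Edgeworth expansion. -/
def edgePoly (q : ℂ → ℂ) (b : ℕ) : Polynomial ℂ :=
  ∑ m ∈ range (b + 1), .C (edgeCoeff q m (b - m) * Complex.I ^ (3 * m + (b - m))) *
    hermitePoly (3 * m + (b - m))

section EdgeExpansion

variable {ρ A : ℝ} {q : ℂ → ℂ}

lemma norm_taylorQuotient_pow_le (hρ : 0 < ρ) (hA : 2 / ρ ≤ A)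
    (hd : DifferentiableOn ℂ q (Metric.ball 0 ρ)) (hq : ∀ z ∈ Metric.ball (0 : ℂ) ρ, ‖q z‖ ≤ A)
    (m l : ℕ) {z : ℂ} (hz : z ∈ Metric.ball (0 : ℂ) ρ) :
    ‖taylorQuotient (fun z => q z ^ m) l z‖ ≤ A ^ (m + l) := by
  have h0 : 0 ≤ A := le_trans (by positivity) hA
  refine ((taylorQuotient_bound hρ (hd.pow m) (B := A ^ m) (fun z hz => ?_) l).2 z hz).trans ?_
  · rw [Pi.pow_apply, norm_pow]
    exact pow_le_pow_left₀ (norm_nonneg _) (hq z hz) m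
  · rw [pow_add]
    gcongr

lemma norm_div_factorial_le (z : ℂ) (m : ℕ) : ‖z / (m.factorial : ℂ)‖ ≤ ‖z‖ := by
  rw [norm_div, Complex.norm_natCast]
  exact div_le_self (norm_nonneg _) (by exact_mod_cast m.factorial_pos)

lemma norm_edgeCoeff_le (hρ : 0 < ρ) (hA : 2 / ρ ≤ A)
    (hd : DifferentiableOn ℂ q (Metric.ball 0 ρ)) (hq : ∀ z ∈ Metric.ball (0 : ℂ) ρ, ‖q z‖ ≤ A)
    (m l : ℕ) : ‖edgeCoeff q m l‖ ≤ A ^ (m + l) :=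
  (norm_div_factorial_le _ _).trans
    (norm_taylorQuotient_pow_le hρ hA hd hq m l (Metric.mem_ball_self hρ))

lemma abs_pow_le_one_add_abs_pow (u : ℝ) {j k : ℕ} (h : j ≤ k) : |u| ^ j ≤ (1 + |u|) ^ k :=
  calc |u| ^ j ≤ (1 + |u|) ^ j := pow_le_pow_left₀ (abs_nonneg u) (by linarith) j
    _ ≤ _ := pow_le_pow_right₀ (by linarith [abs_nonneg u]) h

lemma norm_exp_sub_edgeSum_le (hρ : 0 < ρ) (hA : 2 / ρ ≤ A) (hA1 : 1 ≤ A)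
    (hd : DifferentiableOn ℂ q (Metric.ball 0 ρ)) (hq : ∀ z ∈ Metric.ball (0 : ℂ) ρ, ‖q z‖ ≤ A)
    (r : ℕ) {w u : ℝ} (hw : 0 < w) (hu1 : |u| * w < ρ) (hu2 : |u| * w ≤ 1 / (4 * A)) :
    ‖Complex.exp (w * (Complex.I * u) ^ 3 * q (Complex.I * u * w)) - edgeSum q r w u‖ ≤
      (r + 1) * A ^ r * w ^ r * (1 + |u|) ^ (5 * r) * Real.exp (u ^ 2 / 4) := by
  set ζ : ℂ := Complex.I * u * w with hζ
  have hζn : ‖ζ‖ = |u| * w := by simp [hζ, abs_of_pos hw]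
  have hZn : ‖Complex.I * (u : ℂ)‖ = |u| := by simp
  have hζb : ζ ∈ Metric.ball (0 : ℂ) ρ := by simpa [hζn] using hu1
  set y : ℂ := w * (Complex.I * u) ^ 3 * q ζ with hy
  have hu0 := abs_nonneg u
  have hyn : ‖y‖ ≤ w * |u| ^ 3 * A := by
    rw [hy, norm_mul, norm_mul, norm_pow, hZn, Complex.norm_real, Real.norm_of_nonneg hw.le]
    gcongr
    exact hq ζ hζb
  have hyn2 : ‖y‖ ≤ u ^ 2 / 4 := by
    refine hyn.trans ?_
    calc w * |u| ^ 3 * A = (|u| * w) * (u ^ 2 * A) := by rw [← sq_abs u]; ring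
      _ ≤ 1 / (4 * A) * (u ^ 2 * A) := by gcongr
      _ = _ := by field_simp
  have hone : 1 ≤ Real.exp (u ^ 2 / 4) := Real.one_le_exp (by positivity)
  have h1 : ‖Complex.exp y - ∑ m ∈ range r, y ^ m / (m.factorial : ℂ)‖ ≤
      A ^ r * w ^ r * (1 + |u|) ^ (5 * r) * Real.exp (u ^ 2 / 4) := by
    refine (Complex.norm_exp_sub_sum_le_norm_mul_exp y r).trans ?_
    calc ‖y‖ ^ r * Real.exp ‖y‖ ≤ (w * |u| ^ 3 * A) ^ r * Real.exp (u ^ 2 / 4) := by gcongr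
      _ = A ^ r * w ^ r * |u| ^ (3 * r) * Real.exp (u ^ 2 / 4) := by rw [pow_mul]; ring
      _ ≤ _ := by
        gcongr
        exact abs_pow_le_one_add_abs_pow u (by lia)
  have h2 : ‖∑ m ∈ range r, y ^ m / (m.factorial : ℂ) - edgeSum q r w u‖ ≤
      r * (A ^ r * w ^ r * (1 + |u|) ^ (5 * r) * Real.exp (u ^ 2 / 4)) := by
    rw [edgeSum, ← sum_sub_distrib]
    refine (norm_sum_le _ _).trans ?_
    refine (sum_le_card_nsmul _ _ (A ^ r * w ^ r * (1 + |u|) ^ (5 * r) * Real.exp (u ^ 2 / 4))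
      fun m hm => ?_).trans (by simp)
    have hm := mem_range.1 hm
    have hexp := taylorQuotient_expansion (fun z => q z ^ m) (r - m) ζ
    have heq : y ^ m / (m.factorial : ℂ) - ∑ l ∈ range (r - m),
        edgeCoeff q m l * (w : ℂ) ^ (m + l) * (Complex.I * u) ^ (3 * m + l) =
        (w : ℂ) ^ m * (Complex.I * u) ^ (3 * m) * ζ ^ (r - m) *
          taylorQuotient (fun z => q z ^ m) (r - m) ζ / (m.factorial : ℂ) := by
      rw [hy, mul_pow, mul_pow, hexp, ← pow_mul, sub_eq_iff_eq_add, mul_add, add_div,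
        add_comm, mul_sum, sum_div]
      congr 1
      · ring
      · refine sum_congr rfl fun l _ => ?_
        rw [edgeCoeff, hζ]
        ring
    rw [heq]
    refine (norm_div_factorial_le _ _).trans ?_
    rw [norm_mul, norm_mul, norm_mul, norm_pow, norm_pow, norm_pow, hZn, hζn, Complex.norm_real,
      Real.norm_of_nonneg hw.le]
    have hr : m + (r - m) = r := by lia
    calc w ^ m * |u| ^ (3 * m) * (|u| * w) ^ (r - m) *
          ‖taylorQuotient (fun z => q z ^ m) (r - m) ζ‖
        ≤ w ^ m * |u| ^ (3 * m) * (|u| * w) ^ (r - m) * A ^ (m + (r - m)) := by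
          gcongr
          exact norm_taylorQuotient_pow_le hρ hA hd hq m _ hζb
      _ = A ^ (m + (r - m)) * w ^ (m + (r - m)) * |u| ^ (3 * m + (r - m)) * 1 := by
          rw [mul_pow, pow_add |u|, pow_add w]; ring
      _ ≤ _ := by
          rw [hr]
          gcongr
          exact abs_pow_le_one_add_abs_pow u (by lia)
  calc _ ≤ _ := norm_sub_le_norm_sub_add_norm_sub _ (∑ m ∈ range r, y ^ m / (m.factorial : ℂ)) _
    _ ≤ _ := add_le_add h1 h2
    _ = _ := by ring

lemma norm_edgeSum_le (hρ : 0 < ρ) (hA : 2 / ρ ≤ A) (hA1 : 1 ≤ A)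
    (hd : DifferentiableOn ℂ q (Metric.ball 0 ρ)) (hq : ∀ z ∈ Metric.ball (0 : ℂ) ρ, ‖q z‖ ≤ A)
    (r : ℕ) {w u δ : ℝ} (hw : 0 < w) (hw1 : w ≤ 1) (hδ : 0 < δ) (hu : δ ≤ |u| * w) :
    ‖edgeSum q r w u‖ ≤
      r * r * A ^ r / δ ^ r * w ^ r * (1 + |u|) ^ (5 * r) * Real.exp (u ^ 2 / 4) := by
  have hZn : ‖Complex.I * (u : ℂ)‖ = |u| := by simp
  have hu0 := abs_nonneg u
  have hone : 1 ≤ Real.exp (u ^ 2 / 4) := Real.one_le_exp (by positivity)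
  have h1 : ‖edgeSum q r w u‖ ≤ r * (r * (A ^ r * (1 + |u|) ^ (4 * r))) := by
    refine (norm_sum_le _ _).trans ((sum_le_card_nsmul _ _ (r * (A ^ r * (1 + |u|) ^ (4 * r)))
      fun m hm => ?_).trans (by simp))
    have hm := mem_range.1 hm
    refine (norm_sum_le _ _).trans ((sum_le_card_nsmul _ _ (A ^ r * (1 + |u|) ^ (4 * r))
      fun l hl => ?_).trans ?_)
    · have hl := mem_range.1 hl
      rw [norm_mul, norm_mul, norm_pow, norm_pow, hZn, Complex.norm_real,
        Real.norm_of_nonneg hw.le]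
      calc _ ≤ A ^ (m + l) * 1 * (1 + |u|) ^ (4 * r) := by
            gcongr
            · exact norm_edgeCoeff_le hρ hA hd hq m l
            · exact pow_le_one₀ hw.le hw1
            · exact abs_pow_le_one_add_abs_pow u (by lia)
        _ ≤ A ^ r * (1 + |u|) ^ (4 * r) := by
            rw [mul_one]
            gcongr
            lia
    · rw [card_range, nsmul_eq_mul]
      gcongr
      exact_mod_cast Nat.sub_le r m
  have h2 : 1 ≤ ((1 + |u|) * w / δ) ^ r := by
    refine one_le_pow₀ ?_
    rw [le_div_iff₀ hδ]
    nlinarith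
  calc ‖edgeSum q r w u‖ ≤ r * (r * (A ^ r * (1 + |u|) ^ (4 * r))) * 1 * 1 := by linarith
    _ ≤ r * (r * (A ^ r * (1 + |u|) ^ (4 * r))) * ((1 + |u|) * w / δ) ^ r *
        Real.exp (u ^ 2 / 4) := by gcongr
    _ = _ := by
      rw [div_pow, mul_pow, show 5 * r = 4 * r + r by ring, pow_add (1 + |u|)]
      ring

end EdgeExpansion

lemma integral_gauss_mul_edgeSum (q : ℂ → ℂ) (r : ℕ) (w x : ℝ) :
    Integrable (fun u : ℝ => Complex.exp (-(Complex.I * u * x) - (u : ℂ) ^ 2 / 2) *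
      edgeSum q r w u) ∧
    ∫ u : ℝ, Complex.exp (-(Complex.I * u * x) - (u : ℂ) ^ 2 / 2) * edgeSum q r w u =
      ∑ b ∈ range r, (w : ℂ) ^ b * (edgePoly q b).eval (x : ℂ) * gaussDensity x := by
  have h : ∀ u : ℝ, Complex.exp (-(Complex.I * u * x) - (u : ℂ) ^ 2 / 2) * edgeSum q r w u =
      ∑ b ∈ range r, ∑ m ∈ range (b + 1), (w : ℂ) ^ b *
        (edgeCoeff q m (b - m) * Complex.I ^ (3 * m + (b - m))) *
        gaussMonomial (3 * m + (b - m)) x u := fun u => by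
    have hflip := sum_range_diag_flip r fun m l =>
      Complex.exp (-(Complex.I * u * x) - (u : ℂ) ^ 2 / 2) *
        (edgeCoeff q m l * (w : ℂ) ^ (m + l) * (Complex.I * u) ^ (3 * m + l))
    simp_rw [← mul_sum] at hflip
    rw [edgeSum, ← hflip, mul_sum]
    refine sum_congr rfl fun b _ => ?_
    rw [mul_sum]
    refine sum_congr rfl fun m hm => ?_
    have : m + (b - m) = b := by have := mem_range.1 hm; lia
    simp only [gaussMonomial, this]
    ring
  have hi : ∀ b m, Integrable fun u : ℝ => (w : ℂ) ^ b *
        (edgeCoeff q m (b - m) * Complex.I ^ (3 * m + (b - m))) *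
        gaussMonomial (3 * m + (b - m)) x u := fun b m =>
    (integrable_gaussMonomial _ x).const_mul _
  simp_rw [h]
  refine ⟨integrable_finsetSum _ fun b _ => integrable_finsetSum _ fun m _ => hi b m, ?_⟩
  rw [integral_finsetSum _ fun b _ => integrable_finsetSum _ fun m _ => hi b m]
  refine sum_congr rfl fun b _ => ?_
  rw [integral_finsetSum _ fun m _ => hi b m, edgePoly, Polynomial.eval_finsetSum, mul_sum,
    sum_mul]
  refine sum_congr rfl fun m _ => ?_
  rw [integral_const_mul, integral_gaussMonomial, Polynomial.eval_mul, Polynomial.eval_C]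
  ring

lemma edgeworth_integral {ρ A : ℝ} (hρ : 0 < ρ) (hA : 2 / ρ ≤ A) (hA1 : 1 ≤ A) {q : ℂ → ℂ}
    (hd : DifferentiableOn ℂ q (Metric.ball 0 ρ)) (hq : ∀ z ∈ Metric.ball (0 : ℂ) ρ, ‖q z‖ ≤ A)
    (r : ℕ) {δ σ : ℝ} (hδ : 0 < δ) (hδρ : δ < ρ) (hδA : δ ≤ 1 / (4 * A)) (hσ : 1 ≤ σ) (x : ℝ) :
    ‖(∫ t in (-δ)..δ, Complex.exp (-(Complex.I * t * (σ * x : ℝ))) *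
        Complex.exp (σ ^ 2 * (Complex.I * t) ^ 2 / 2 +
          σ ^ 2 * (Complex.I * t) ^ 3 * q (Complex.I * t))) -
      ∑ b ∈ range r, (σ⁻¹ : ℂ) ^ (b + 1) * (edgePoly q b).eval (x : ℂ) * gaussDensity x‖ ≤
    ((r + 1) * A ^ r + r * r * A ^ r / δ ^ r) *
      (∫ u : ℝ, (1 + |u|) ^ (5 * r) * Real.exp (-(1 / 4) * u ^ 2)) * σ⁻¹ ^ (r + 1) := by
  have hσ0 : 0 < σ := by linarith
  have hσC : (σ : ℂ) ≠ 0 := by exact_mod_cast hσ0.ne'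
  set w : ℝ := σ⁻¹ with hw
  have hw0 : 0 < w := inv_pos.2 hσ0
  have hw1 : w ≤ 1 := inv_le_one_of_one_le₀ hσ
  have hwC : (σ⁻¹ : ℂ) = (w : ℂ) := by simp [hw]
  have hσw : σ * w = 1 := mul_inv_cancel₀ hσ0.ne'
  let F : ℝ → ℂ := fun u => Complex.exp (-(Complex.I * u * x) - (u : ℂ) ^ 2 / 2) *
    Complex.exp (w * (Complex.I * u) ^ 3 * q (Complex.I * u * w))
  let G : ℝ → ℂ := fun t => Complex.exp (-(Complex.I * t * (σ * x : ℝ))) *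
    Complex.exp (σ ^ 2 * (Complex.I * t) ^ 2 / 2 +
      σ ^ 2 * (Complex.I * t) ^ 3 * q (Complex.I * t))
  have hF : ∀ u : ℝ, F u = G (u / σ) := fun u => by
    have h1 : ((u / σ : ℝ) : ℂ) = u * w := by rw [hw]; push_cast; rw [div_eq_mul_inv]
    have h2 : (σ : ℂ) * w = 1 := by exact_mod_cast hσw
    simp only [F, G, h1]
    rw [← Complex.exp_add, ← Complex.exp_add, ← mul_assoc]
    congr 1
    push_cast
    linear_combination (Complex.I * u * x - (Complex.I * u) ^ 2 / 2 * (σ * w + 1)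
      - (Complex.I * u) ^ 3 * w * (σ * w + 1) * q (Complex.I * u * w)) * h2 -
      u ^ 2 / 2 * Complex.I_sq
  have hchange : ∫ t in (-δ)..δ, G t =
      w * ∫ u, (Set.Ioc (-(δ * σ)) (δ * σ)).indicator F u := by
    rw [integral_indicator measurableSet_Ioc, ← intervalIntegral.integral_of_le
      (by nlinarith [mul_pos hδ hσ0])]
    simp_rw [hF]
    rw [intervalIntegral.integral_comp_div G hσ0.ne', neg_div, mul_div_cancel_right₀ _ hσ0.ne',
      Complex.real_smul, ← mul_assoc]
    have h2 : (w : ℂ) * σ = 1 := by rw [mul_comm]; exact_mod_cast hσw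
    rw [h2, one_mul]
  obtain ⟨hinteg, hval⟩ := integral_gauss_mul_edgeSum q r w x
  have hsum : ∑ b ∈ range r, (σ⁻¹ : ℂ) ^ (b + 1) * (edgePoly q b).eval (x : ℂ) * gaussDensity x =
      w * ∫ u : ℝ, Complex.exp (-(Complex.I * u * x) - (u : ℂ) ^ 2 / 2) * edgeSum q r w u := by
    rw [hval, hwC, mul_sum]
    exact sum_congr rfl fun b _ => by ring
  have hIint : Integrable ((Set.Ioc (-(δ * σ)) (δ * σ)).indicator F) := by
    rw [integrable_indicator_iff measurableSet_Ioc]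
    refine (ContinuousOn.integrableOn_Icc ?_).mono_set Set.Ioc_subset_Icc_self
    refine ContinuousOn.mul (by fun_prop) (ContinuousOn.cexp (ContinuousOn.mul (by fun_prop) ?_))
    refine hd.continuousOn.comp (by fun_prop) fun u hu => ?_
    have : |u| * w ≤ δ := by
      calc |u| * w ≤ (δ * σ) * w := by gcongr; exact abs_le.2 hu
        _ = δ := by rw [mul_assoc, hσw, mul_one]
    simpa [abs_of_pos hw0] using this.trans_lt hδρ
  change ‖(∫ t in (-δ)..δ, G t) - _‖ ≤ _
  rw [hchange, hsum, ← mul_sub, ← integral_sub hIint hinteg, norm_mul, Complex.norm_real,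
    Real.norm_of_nonneg hw0.le]
  have hbound : ∀ u, ‖(Set.Ioc (-(δ * σ)) (δ * σ)).indicator F u -
      Complex.exp (-(Complex.I * u * x) - (u : ℂ) ^ 2 / 2) * edgeSum q r w u‖ ≤
      ((r + 1) * A ^ r + r * r * A ^ r / δ ^ r) * w ^ r *
        ((1 + |u|) ^ (5 * r) * Real.exp (-(1 / 4) * u ^ 2)) := fun u => by
    have hexp : Real.exp (-(1 / 4) * u ^ 2) = Real.exp (-u ^ 2 / 2) * Real.exp (u ^ 2 / 4) := by
      rw [← Real.exp_add]; congr 1; ring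
    by_cases hu : u ∈ Set.Ioc (-(δ * σ)) (δ * σ)
    · have huw : |u| * w ≤ δ := by
        calc |u| * w ≤ (δ * σ) * w := by gcongr; exact abs_le.2 ⟨hu.1.le, hu.2⟩
          _ = δ := by rw [mul_assoc, hσw, mul_one]
      rw [Set.indicator_of_mem hu, ← mul_sub, norm_mul, norm_cexp_gauss, hexp]
      calc _ ≤ Real.exp (-u ^ 2 / 2) *
            ((r + 1) * A ^ r * w ^ r * (1 + |u|) ^ (5 * r) * Real.exp (u ^ 2 / 4)) := by
            gcongr
            exact norm_exp_sub_edgeSum_le hρ hA hA1 hd hq r hw0 (huw.trans_lt hδρ) (huw.trans hδA)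
        _ = ((r + 1) * A ^ r + 0) * w ^ r *
            ((1 + |u|) ^ (5 * r) * (Real.exp (-u ^ 2 / 2) * Real.exp (u ^ 2 / 4))) := by ring
        _ ≤ _ := by gcongr; positivity
    · have huw : δ ≤ |u| * w := by
        have : δ * σ ≤ |u| := by
          by_contra! h
          exact hu ⟨(abs_lt.1 h).1, (abs_lt.1 h).2.le⟩
        calc δ = (δ * σ) * w := by rw [mul_assoc, hσw, mul_one]
          _ ≤ _ := by gcongr
      rw [Set.indicator_of_notMem hu, zero_sub, norm_neg, norm_mul, norm_cexp_gauss, hexp]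
      calc _ ≤ Real.exp (-u ^ 2 / 2) *
            (r * r * A ^ r / δ ^ r * w ^ r * (1 + |u|) ^ (5 * r) * Real.exp (u ^ 2 / 4)) := by
            gcongr
            exact norm_edgeSum_le hρ hA hA1 hd hq r hw0 hw1 hδ huw
        _ = (0 + r * r * A ^ r / δ ^ r) * w ^ r *
            ((1 + |u|) ^ (5 * r) * (Real.exp (-u ^ 2 / 2) * Real.exp (u ^ 2 / 4))) := by ring
        _ ≤ _ := by gcongr; positivity
  have hfin := norm_integral_le_of_norm_le
    ((integrable_one_add_abs_pow_mul_exp (b := 1 / 4) (by norm_num) (5 * r)).const_mul _)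
    (.of_forall hbound)
  rw [integral_const_mul] at hfin
  calc _ ≤ _ := mul_le_mul_of_nonneg_left hfin hw0.le
    _ = _ := by ring

/-- Bounded complex functions that are strongly measurable for the σ-algebra `m`. -/
structure BddMeas {α : Type*} (m : MeasurableSpace α) (u : α → ℂ) : Prop where
  meas : StronglyMeasurable[m] u
  bdd : ∃ M, ∀ x, ‖u x‖ ≤ M

namespace BddMeas

variable {α β : Type*} {m : MeasurableSpace α} {u v : α → ℂ}

theorem const (c : ℂ) : BddMeas m (fun _ => c) :=
  ⟨stronglyMeasurable_const, ‖c‖, fun _ => le_rfl⟩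

theorem add (hu : BddMeas m u) (hv : BddMeas m v) : BddMeas m (fun x => u x + v x) := by
  obtain ⟨M, hM⟩ := hu.bdd
  obtain ⟨M', hM'⟩ := hv.bdd
  exact ⟨hu.meas.add hv.meas, M + M', fun x => (norm_add_le _ _).trans (add_le_add (hM x) (hM' x))⟩

theorem mul (hu : BddMeas m u) (hv : BddMeas m v) : BddMeas m (fun x => u x * v x) := by
  obtain ⟨M, hM⟩ := hu.bdd
  obtain ⟨M', hM'⟩ := hv.bdd
  refine ⟨hu.meas.mul hv.meas, M * M', fun x => ?_⟩
  rw [norm_mul]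
  exact mul_le_mul (hM x) (hM' x) (norm_nonneg _) ((norm_nonneg _).trans (hM x))

theorem sub (hu : BddMeas m u) (hv : BddMeas m v) : BddMeas m (fun x => u x - v x) := by
  simpa [sub_eq_add_neg] using hu.add ((const (-1)).mul hv)

theorem conj (hu : BddMeas m u) : BddMeas m (fun x => starRingEnd ℂ (u x)) := by
  obtain ⟨M, hM⟩ := hu.bdd
  exact ⟨Complex.continuous_conj.comp_stronglyMeasurable hu.meas, M, fun x => by simpa using hM x⟩

theorem cexp (hu : BddMeas m u) : BddMeas m (fun x => Complex.exp (u x)) := by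
  obtain ⟨M, hM⟩ := hu.bdd
  refine ⟨Complex.continuous_exp.comp_stronglyMeasurable hu.meas, Real.exp M, fun x => ?_⟩
  rw [Complex.norm_exp]
  exact Real.exp_le_exp.2 ((Complex.re_le_norm _).trans (hM x))

theorem normSq (hu : BddMeas m u) : BddMeas m (fun x => ((‖u x‖ ^ 2 : ℝ) : ℂ)) := by
  have h := hu.conj.mul hu
  simpa [Complex.conj_mul'] using h

theorem sum {ι : Type*} (s : Finset ι) {w : ι → α → ℂ} (hw : ∀ i ∈ s, BddMeas m (w i)) :
    BddMeas m (fun x => ∑ i ∈ s, w i x) := by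
  classical
  induction s using Finset.induction_on with
  | empty => simpa using const 0
  | insert i s his ih =>
    simp only [Finset.sum_insert his]
    exact (hw i (by simp)).add (ih fun j hj => hw j (by simp [hj]))

theorem mono {m' : MeasurableSpace α} (hmm : m ≤ m') (hu : BddMeas m u) : BddMeas m' u :=
  ⟨hu.meas.mono hmm, hu.bdd⟩

theorem comp {m' : MeasurableSpace β} (hu : BddMeas m u) {X : β → α} (hX : Measurable[m', m] X) :
    BddMeas m' (fun y => u (X y)) :=
  ⟨hu.meas.comp_measurable hX, hu.bdd.imp fun _ h y => h (X y)⟩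

theorem integrable (hu : BddMeas m u) (μ : Measure α) [IsFiniteMeasure μ] : Integrable u μ := by
  obtain ⟨M, hM⟩ := hu.bdd
  exact Integrable.of_bound hu.meas.aestronglyMeasurable M (Eventually.of_forall hM)

theorem integrable_normSq (hu : BddMeas m u) (μ : Measure α) [IsFiniteMeasure μ] :
    Integrable (fun x => ‖u x‖ ^ 2) μ := by
  simpa only [RCLike.re_eq_complex_re, Complex.ofReal_re] using (hu.normSq.integrable μ).re

theorem integrable_norm (hu : BddMeas m u) (μ : Measure α) [IsFiniteMeasure μ] :
    Integrable (fun x => ‖u x‖) μ := (hu.integrable μ).norm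

theorem kernel {m' : MeasurableSpace β} (hu : BddMeas m u) (κ : Kernel β α) [IsMarkovKernel κ] :
    BddMeas m' (fun x => ∫ y, u y ∂κ x) := by
  obtain ⟨M, hM⟩ := hu.bdd
  refine ⟨hu.meas.integral_kernel, M, fun x => ?_⟩
  simpa using norm_integral_le_of_norm_le_const (μ := κ x) (Eventually.of_forall hM)

end BddMeas

/-- The σ-algebra generated by `X 0, …, X n`. -/
abbrev past (X : ℕ → Ω → E) (n : ℕ) : MeasurableSpace Ω :=
  ⨆ i : Fin (n + 1), MeasurableSpace.comap (X i) (inferInstance : MeasurableSpace E)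

/-- Integrals against a measure composed with a kernel. -/
theorem integral_bind_kernel (η : Kernel E E) [IsMarkovKernel η] (ν : Measure E)
    [IsFiniteMeasure ν] {u : E → ℂ} (hu : BddMeas inferInstance u) :
    ∫ y, u y ∂(ν.bind η) = ∫ x, ∫ y, u y ∂η x ∂ν := by
  have h := Kernel.integral_comp (κ := Kernel.const Unit ν) (η := η) (a := ()) (f := u)
  rw [Kernel.comp_apply, Kernel.const_apply] at h
  exact h (hu.integrable _)

namespace UEChain

variable {μ : Measure Ω} {X : ℕ → Ω → E} {κ : ℕ → Kernel E E} {C : ℝ}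

theorem past_le (h : UEChain μ X κ C) (n : ℕ) : past X n ≤ (inferInstance : MeasurableSpace Ω) :=
  iSup_le fun i => (h.2.1 i).comap_le

theorem measurable_past {Ω' : Type*} (X : ℕ → Ω' → E) {i n : ℕ} (hin : i ≤ n) : Measurable[past X n] (X i) := by
  have h : MeasurableSpace.comap (X i) inferInstance ≤ past X n :=
    le_iSup (fun j : Fin (n + 1) => MeasurableSpace.comap (X j) (inferInstance : MeasurableSpace E))
      ⟨i, by omega⟩
  exact (comap_measurable (X i)).mono h le_rfl

theorem past_mono {Ω' : Type*} (X : ℕ → Ω' → E) (n : ℕ) : past X n ≤ past X (n + 1) :=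
  iSup_le fun i => (measurable_past X (by omega : (i : ℕ) ≤ n + 1)).comap_le

theorem map_restrict_succ (h : UEChain μ X κ C) (n : ℕ) {s : Set Ω}
    (hs : MeasurableSet[past X n] s) :
    (μ.restrict s).map (X (n + 1)) = ((μ.restrict s).map (X n)).bind (κ n) := by
  have := h.1
  have := h.2.2.1
  have hs' := h.past_le n s hs
  ext A hA
  have hinteg : Integrable (fun ω => A.indicator (fun _ => (1 : ℝ)) (X (n + 1) ω)) μ := by
    refine Integrable.of_bound (((measurable_const.indicator hA).comp
      (h.2.1 (n + 1))).aestronglyMeasurable) 1 (Eventually.of_forall fun ω => ?_)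
    by_cases hω : X (n + 1) ω ∈ A <;> simp [hω]
  have h1 := setIntegral_condExp (h.past_le n) hinteg hs
  rw [setIntegral_congr_ae hs' ((h.2.2.2.1 n A hA).mono fun ω hω _ => hω)] at h1
  rw [Measure.map_apply (h.2.1 _) hA, Measure.bind_apply hA (κ n).aemeasurable,
    lintegral_map ((κ n).measurable_coe hA) (h.2.1 n)]
  have hL : (∫⁻ ω in s, κ n (X n ω) A ∂μ) ≠ ⊤ := by
    refine ne_of_lt (lt_of_le_of_lt (lintegral_mono fun ω => prob_le_one) ?_)
    simp
  rw [integral_toReal (f := fun ω => κ n (X n ω) A)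
    (((κ n).measurable_coe hA).comp (h.2.1 n)).aemeasurable
    (Eventually.of_forall fun ω => measure_lt_top _ _)] at h1
  have h2 : ∫ ω in s, A.indicator (fun _ => (1 : ℝ)) (X (n + 1) ω) ∂μ
      = ((μ.restrict s) (X (n + 1) ⁻¹' A)).toReal := by
    have := integral_indicator_one (μ := μ.restrict s) ((h.2.1 (n + 1)) hA)
    rw [Measure.real] at this
    rw [← this]
    rfl
  rw [h2] at h1
  exact ((ENNReal.toReal_eq_toReal_iff' hL (measure_ne_top _ _)).1 h1).symm

/-- The Markov property: the conditional expectation of `u(X_{n+1})` given the past. -/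
theorem condExp_succ (h : UEChain μ X κ C) (n : ℕ) {u : E → ℂ} (hu : BddMeas inferInstance u) :
    (fun ω => ∫ y, u y ∂κ n (X n ω)) =ᵐ[μ] μ[fun ω => u (X (n + 1) ω) | past X n] := by
  have := h.1
  have := h.2.2.1
  have hQ : BddMeas (past X n) (fun ω => ∫ y, u y ∂κ n (X n ω)) :=
    (hu.kernel (κ n)).comp (measurable_past X le_rfl)
  refine ae_eq_condExp_of_forall_setIntegral_eq (h.past_le n)
    ((hu.comp (h.2.1 _)).integrable μ)
    (fun s _ _ => ((hQ.mono (h.past_le n)).integrable μ).integrableOn) (fun s hs _ => ?_)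
    hQ.meas.aestronglyMeasurable
  rw [← integral_map (h.2.1 n).aemeasurable (hu.kernel (κ n)).meas.aestronglyMeasurable,
    ← integral_map (h.2.1 (n + 1)).aemeasurable hu.meas.aestronglyMeasurable,
    h.map_restrict_succ n hs, integral_bind_kernel _ _ hu]

/-- The Markov property, tested against bounded functions of the past. -/
theorem integral_mul_succ (h : UEChain μ X κ C) (n : ℕ) {Z : Ω → ℂ} (hZ : BddMeas (past X n) Z)
    {u : E → ℂ} (hu : BddMeas inferInstance u) :
    ∫ ω, Z ω * u (X (n + 1) ω) ∂μ = ∫ ω, Z ω * ∫ y, u y ∂κ n (X n ω) ∂μ := by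
  have := h.1
  have hu' := hu.comp (h.2.1 (n + 1))
  have h1 := condExp_bilin_of_stronglyMeasurable_left (μ := μ) (ContinuousLinearMap.mul ℝ ℂ)
    hZ.meas (((hZ.mono (h.past_le n)).mul hu').integrable μ) (hu'.integrable μ)
  rw [← integral_condExp (h.past_le n)]
  refine integral_congr_ae (h1.trans ?_)
  filter_upwards [h.condExp_succ n hu] with ω hω
  simp [hω]

theorem integral_succ (h : UEChain μ X κ C) (n : ℕ) {u : E → ℂ} (hu : BddMeas inferInstance u) :
    ∫ ω, ∫ y, u y ∂κ n (X n ω) ∂μ = ∫ ω, u (X (n + 1) ω) ∂μ := by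
  simpa using (h.integral_mul_succ n (BddMeas.const 1) hu).symm

end UEChain

theorem integral_normSq_sub_const {α : Type*} {m : MeasurableSpace α} (ν : Measure α)
    [IsProbabilityMeasure ν] {g : α → ℂ} (hg : BddMeas m g) (c : ℂ) :
    ∫ x, ‖g x - c‖ ^ 2 ∂ν
      = ∫ x, ‖g x‖ ^ 2 ∂ν - 2 * (starRingEnd ℂ c * ∫ x, g x ∂ν).re + ‖c‖ ^ 2 := by
  have h1 : ∀ x, ‖g x - c‖ ^ 2 = ‖g x‖ ^ 2 - 2 * (starRingEnd ℂ c * g x).re + ‖c‖ ^ 2 := by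
    intro x
    rw [Complex.sq_norm, Complex.sq_norm, Complex.sq_norm, Complex.normSq_sub]
    rw [mul_comm (g x)]
    ring
  have hi := ((BddMeas.const (m := m) (starRingEnd ℂ c)).mul hg).integrable ν
  have h2 : ∫ x, (starRingEnd ℂ c * g x).re ∂ν = (starRingEnd ℂ c * ∫ x, g x ∂ν).re := by
    rw [← integral_const_mul]
    exact integral_re hi
  have hre : Integrable (fun x => 2 * (starRingEnd ℂ c * g x).re) ν := hi.re.const_mul 2
  simp_rw [h1]
  have hsub : Integrable (fun x => ‖g x‖ ^ 2 - 2 * (starRingEnd ℂ c * g x).re) ν :=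
    (hg.integrable_normSq ν).sub hre
  rw [integral_add hsub (integrable_const _),
    integral_sub (hg.integrable_normSq ν) hre, integral_const_mul, h2]
  simp

theorem isClosed_setOf_quadratic_le (W b a : ℝ) (s : ℂ) :
    IsClosed {c : ℂ | b * (W + ‖c‖ ^ 2) ≤ a - 2 * (starRingEnd ℂ c * s).re + ‖c‖ ^ 2} :=
  isClosed_le (by fun_prop) (by fun_prop)

namespace UEChain

variable {μ : Measure Ω} {X : ℕ → Ω → E} {κ : ℕ → Kernel E E} {C : ℝ}

theorem lintegral_map_le (h : UEChain μ X κ C) (n : ℕ) {u : E → ℝ≥0∞} (hu : Measurable u) :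
    ∀ᵐ ω ∂μ, ∫⁻ y, u y ∂(μ.map (X (n + 1))) ≤ ENNReal.ofReal C * ∫⁻ y, u y ∂κ n (X n ω) := by
  refine Measurable.ennreal_induction (motive := fun u => ∀ᵐ ω ∂μ,
    ∫⁻ y, u y ∂(μ.map (X (n + 1))) ≤ ENNReal.ofReal C * ∫⁻ y, u y ∂κ n (X n ω))
    (fun c s hs => ?_) (fun f g _ hf hg hf' hg' => ?_) (fun f hf hmono hf' => ?_) hu
  · filter_upwards [h.2.2.2.2 n s hs] with ω hω
    rw [lintegral_indicator_const hs, lintegral_indicator_const hs, mul_left_comm]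
    gcongr
    exact hω.2
  · filter_upwards [hf', hg'] with ω h1 h2
    simp only [Pi.add_apply]
    rw [lintegral_add_left hf, lintegral_add_left hf, mul_add]
    exact add_le_add h1 h2
  · filter_upwards [ae_all_iff.2 hf'] with ω hω
    rw [lintegral_iSup hf hmono, lintegral_iSup hf hmono, ENNReal.mul_iSup]
    exact iSup_mono hω

theorem integral_normSq_le (h : UEChain μ X κ C) (hC : 1 < C) (n : ℕ) {g : E → ℂ}
    (hg : BddMeas inferInstance g) :
    ∀ᵐ ω ∂μ, C⁻¹ * ∫ ω', ‖g (X (n + 1) ω')‖ ^ 2 ∂μ ≤ ∫ y, ‖g y‖ ^ 2 ∂κ n (X n ω) := by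
  have := h.1
  have := h.2.2.1
  have : IsProbabilityMeasure (μ.map (X (n + 1))) :=
    Measure.isProbabilityMeasure_map (h.2.1 _).aemeasurable
  have hm : StronglyMeasurable (fun y => ‖g y‖ ^ 2) := hg.meas.norm.pow 2
  filter_upwards [h.lintegral_map_le n hm.measurable.ennreal_ofReal] with ω hω
  rw [← ofReal_integral_eq_lintegral_ofReal (hg.integrable_normSq _)
      (Eventually.of_forall fun y => by positivity),
    ← ofReal_integral_eq_lintegral_ofReal (hg.integrable_normSq _)
      (Eventually.of_forall fun y => by positivity),
    ← ENNReal.ofReal_mul (by linarith), ENNReal.ofReal_le_ofReal_iff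
      (mul_nonneg (by linarith) (integral_nonneg fun y => by positivity)),
    integral_map (h.2.1 _).aemeasurable hm.aestronglyMeasurable] at hω
  rw [inv_mul_le_iff₀ (by linarith)]
  exact hω

theorem integral_normSq_succ (h : UEChain μ X κ C) (n : ℕ) {g : E → ℂ}
    (hg : BddMeas inferInstance g) :
    ∫ ω, ∫ y, ‖g y‖ ^ 2 ∂κ n (X n ω) ∂μ = ∫ ω, ‖g (X (n + 1) ω)‖ ^ 2 ∂μ := by
  have := h.integral_succ n hg.normSq
  simp_rw [integral_complex_ofReal] at this
  exact_mod_cast this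

/-- Uniform ellipticity gives a spectral gap on functions of mean zero. -/
theorem spectral_gap (h : UEChain μ X κ C) (hC : 1 < C) (n : ℕ) {g : E → ℂ}
    (hg : BddMeas inferInstance g) (hmean : ∫ ω, g (X (n + 1) ω) ∂μ = 0) :
    ∫ ω, ‖∫ y, g y ∂κ n (X n ω)‖ ^ 2 ∂μ ≤ (1 - C⁻¹) * ∫ ω, ‖g (X (n + 1) ω)‖ ^ 2 ∂μ := by
  have := h.1
  have := h.2.2.1
  have hC0 : 0 < C⁻¹ := by positivity
  have hgX := hg.comp (h.2.1 (n + 1))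
  have hQ : BddMeas inferInstance (fun ω => ∫ y, g y ∂κ n (X n ω)) :=
    (hg.kernel (κ n)).comp (h.2.1 n)
  set W := ∫ ω, ‖g (X (n + 1) ω)‖ ^ 2 ∂μ with hW
  have key : ∀ᵐ ω ∂μ, ‖∫ y, g y ∂κ n (X n ω)‖ ^ 2 ≤ ∫ y, ‖g y‖ ^ 2 ∂κ n (X n ω) - C⁻¹ * W := by
    have hall : ∀ᵐ ω ∂μ, ∀ i : ℕ, C⁻¹ *
        ∫ ω', ‖g (X (n + 1) ω') - TopologicalSpace.denseSeq ℂ i‖ ^ 2 ∂μ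
          ≤ ∫ y, ‖g y - TopologicalSpace.denseSeq ℂ i‖ ^ 2 ∂κ n (X n ω) :=
      by
      refine ae_all_iff.2 fun i => ?_
      generalize TopologicalSpace.denseSeq ℂ i = c
      exact h.integral_normSq_le hC n (g := fun y => g y - c) (hg.sub (BddMeas.const c))
    filter_upwards [hall] with ω hω
    have hc : ∀ c : ℂ, C⁻¹ * (W + ‖c‖ ^ 2) ≤ ∫ y, ‖g y‖ ^ 2 ∂κ n (X n ω)
        - 2 * (starRingEnd ℂ c * ∫ y, g y ∂κ n (X n ω)).re + ‖c‖ ^ 2 := by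
      refine fun c => isClosed_property (TopologicalSpace.denseRange_denseSeq ℂ)
        (isClosed_setOf_quadratic_le W _ _ _) (fun i => ?_) c
      have := hω i
      rw [integral_normSq_sub_const μ hgX, hmean, integral_normSq_sub_const _ hg] at this
      simpa using this
    have h1 := hc (∫ y, g y ∂κ n (X n ω))
    rw [Complex.conj_mul', ← Complex.ofReal_pow, Complex.ofReal_re] at h1
    nlinarith [sq_nonneg ‖∫ y, g y ∂κ n (X n ω)‖]
  have hi : Integrable (fun ω => ∫ y, ‖g y‖ ^ 2 ∂κ n (X n ω)) μ := by
    have := ((hg.normSq.kernel (κ n)).comp (h.2.1 n)).integrable μ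
    simp_rw [integral_complex_ofReal] at this
    simpa only [RCLike.re_eq_complex_re, Complex.ofReal_re] using this.re
  have h2 := integral_mono_ae (hQ.integrable_normSq μ) (hi.sub (integrable_const (C⁻¹ * W))) key
  simp only [Pi.sub_apply] at h2
  rw [integral_sub hi (integrable_const _), h.integral_normSq_succ n hg] at h2
  simp only [integral_const, probReal_univ, smul_eq_mul, one_mul] at h2
  linarith

end UEChain

/-- The sum `a (n + 1) + ⋯ + a (n + k)`. -/
def tailSum {M : Type*} [AddCommMonoid M] (a : ℕ → M) : ℕ → ℕ → M
  | _, 0 => 0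
  | n, k + 1 => a (n + 1) + tailSum a (n + 1) k

theorem tailSum_eq_sum {M : Type*} [AddCommMonoid M] (a : ℕ → M) (n k : ℕ) :
    tailSum a n k = ∑ i ∈ Finset.range k, a (n + 1 + i) := by
  induction k generalizing n with
  | zero => simp [tailSum]
  | succ k ih =>
    rw [tailSum, ih, Finset.sum_range_succ', add_comm]
    simp [add_comm, add_left_comm]

theorem tailSum_zero_eq_sum_Icc {M : Type*} [AddCommMonoid M] (a : ℕ → M) (k : ℕ) :
    tailSum a 0 k = ∑ i ∈ Finset.Icc 1 k, a i := by
  have h := Finset.sum_Ico_add' a 0 k 1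
  rw [tailSum_eq_sum, Finset.range_eq_Ico]
  simp only [zero_add, add_comm 1]
  rw [h]
  rfl

theorem tailSum_nonneg {a : ℕ → ℝ} (ha : ∀ i, 0 ≤ a i) (n k : ℕ) : 0 ≤ tailSum a n k := by
  rw [tailSum_eq_sum]
  exact Finset.sum_nonneg fun i _ => ha _

theorem integral_normSq_add {α : Type*} {m : MeasurableSpace α} (ν : Measure α)
    [IsProbabilityMeasure ν] {a b : α → ℂ} (ha : BddMeas m a) (hb : BddMeas m b) :
    ∫ x, ‖a x + b x‖ ^ 2 ∂ν = ∫ x, ‖a x‖ ^ 2 ∂ν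
      + 2 * (∫ x, starRingEnd ℂ (a x) * b x ∂ν).re + ∫ x, ‖b x‖ ^ 2 ∂ν := by
  have h1 : ∀ x, ‖a x + b x‖ ^ 2
      = ‖a x‖ ^ 2 + 2 * (starRingEnd ℂ (a x) * b x).re + ‖b x‖ ^ 2 := by
    intro x
    have hre : (a x * starRingEnd ℂ (b x)).re = (starRingEnd ℂ (a x) * b x).re := by
      simp [Complex.mul_re]
    rw [Complex.sq_norm, Complex.sq_norm, Complex.sq_norm, Complex.normSq_add, hre]
    ring
  have hi := (ha.conj.mul hb).integrable ν
  have hre : Integrable (fun x => 2 * (starRingEnd ℂ (a x) * b x).re) ν := hi.re.const_mul 2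
  have hadd : Integrable (fun x => ‖a x‖ ^ 2 + 2 * (starRingEnd ℂ (a x) * b x).re) ν :=
    (ha.integrable_normSq ν).add hre
  have h2 : ∫ x, (starRingEnd ℂ (a x) * b x).re ∂ν = (∫ x, starRingEnd ℂ (a x) * b x ∂ν).re :=
    integral_re hi
  simp_rw [h1]
  rw [integral_add hadd (hb.integrable_normSq ν), integral_add (ha.integrable_normSq ν) hre,
    integral_const_mul, h2]

/-- The conditional expectation of `y_{n+1}(X_{n+1}) + ⋯ + y_{n+k}(X_{n+k})` given `X_n = x`. -/
def condTail (κ : ℕ → Kernel E E) (y : ℕ → E → ℂ) : ℕ → ℕ → E → ℂ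
  | _, 0 => fun _ => 0
  | n, k + 1 => fun x => ∫ u, (y (n + 1) u + condTail κ y (n + 1) k u) ∂κ n x

namespace UEChain

variable {μ : Measure Ω} {X : ℕ → Ω → E} {κ : ℕ → Kernel E E} {C : ℝ} {y : ℕ → E → ℂ}

theorem bddMeas_condTail (h : UEChain μ X κ C) (hy : ∀ n, BddMeas inferInstance (y n)) (n k : ℕ) :
    BddMeas inferInstance (condTail κ y n k) := by
  have := h.2.2.1
  induction k generalizing n with
  | zero => exact BddMeas.const 0
  | succ k ih => exact ((hy (n + 1)).add (ih (n + 1))).kernel (κ n)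

theorem integral_condTail (h : UEChain μ X κ C) (hy : ∀ n, BddMeas inferInstance (y n))
    (hmean : ∀ n, ∫ ω, y n (X n ω) ∂μ = 0) (n k : ℕ) :
    ∫ ω, condTail κ y n k (X n ω) ∂μ = 0 := by
  have := h.1
  induction k generalizing n with
  | zero => simp [condTail]
  | succ k ih =>
    have hT := h.bddMeas_condTail hy (n + 1) k
    simp only [condTail]
    rw [h.integral_succ n (u := fun x => y (n + 1) x + condTail κ y (n + 1) k x)
      ((hy (n + 1)).add hT), integral_add (((hy _).comp (h.2.1 _)).integrable μ)
      ((hT.comp (h.2.1 _)).integrable μ), hmean, ih, add_zero]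

theorem bddMeas_tailSum (h : UEChain μ X κ C) (hy : ∀ n, BddMeas inferInstance (y n)) (n k : ℕ) :
    BddMeas inferInstance (fun ω => tailSum (fun m => y m (X m ω)) n k) := by
  simp_rw [tailSum_eq_sum]
  exact BddMeas.sum _ fun i _ => (hy _).comp (h.2.1 _)

/-- Replacing `g(X_{n+1})` by its conditional expectation changes second moments by the variance
of the martingale difference. -/
theorem integral_normSq_add_succ (h : UEChain μ X κ C) (n : ℕ) {Z : Ω → ℂ}
    (hZ : BddMeas (past X n) Z) {g : E → ℂ} (hg : BddMeas inferInstance g) :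
    ∫ ω, ‖Z ω + g (X (n + 1) ω)‖ ^ 2 ∂μ
      = ∫ ω, ‖Z ω + ∫ u, g u ∂κ n (X n ω)‖ ^ 2 ∂μ
        + (∫ ω, ‖g (X (n + 1) ω)‖ ^ 2 ∂μ - ∫ ω, ‖∫ u, g u ∂κ n (X n ω)‖ ^ 2 ∂μ) := by
  have := h.1
  have := h.2.2.1
  have hZ' := hZ.mono (h.past_le n)
  rw [integral_normSq_add μ hZ' (hg.comp (h.2.1 (n + 1))),
    integral_normSq_add μ hZ' ((hg.kernel (κ n)).comp (h.2.1 n)),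
    h.integral_mul_succ n hZ.conj hg]
  ring

theorem le_integral_normSq_tailSum (h : UEChain μ X κ C) (hC : 1 < C)
    (hy : ∀ n, BddMeas inferInstance (y n)) (hmean : ∀ n, ∫ ω, y n (X n ω) ∂μ = 0) (n k : ℕ)
    {Z : Ω → ℂ} (hZ : BddMeas (past X n) Z) :
    ∫ ω, ‖Z ω + condTail κ y n k (X n ω)‖ ^ 2 ∂μ
      + (4 * C)⁻¹ * (tailSum (fun m => ∫ ω, ‖y m (X m ω)‖ ^ 2 ∂μ) n k
          + 2 * ∫ ω, ‖condTail κ y n k (X n ω)‖ ^ 2 ∂μ)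
      ≤ ∫ ω, ‖Z ω + tailSum (fun m => y m (X m ω)) n k‖ ^ 2 ∂μ := by
  have := h.1
  have := h.2.2.1
  induction k generalizing n Z with
  | zero => simp [condTail, tailSum]
  | succ k ih =>
    have hT := h.bddMeas_condTail hy (n + 1) k
    have hg := (hy (n + 1)).add hT
    have hZ' : BddMeas (past X (n + 1)) (fun ω => Z ω + y (n + 1) (X (n + 1) ω)) :=
      (hZ.mono (past_mono X n)).add ((hy (n + 1)).comp (measurable_past X le_rfl))
    have h1 := ih (n + 1) hZ'
    have h2 := h.integral_normSq_add_succ n hZ hg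
    have h3 := h.spectral_gap hC n hg (by
      rw [integral_add (((hy _).comp (h.2.1 _)).integrable μ) ((hT.comp (h.2.1 _)).integrable μ),
        hmean, h.integral_condTail hy hmean, add_zero])
    have h4 : ∫ ω, ‖y (n + 1) (X (n + 1) ω)‖ ^ 2 ∂μ
        ≤ 2 * ∫ ω, ‖y (n + 1) (X (n + 1) ω) + condTail κ y (n + 1) k (X (n + 1) ω)‖ ^ 2 ∂μ
          + 2 * ∫ ω, ‖condTail κ y (n + 1) k (X (n + 1) ω)‖ ^ 2 ∂μ := by
      have i1 := (hg.comp (h.2.1 (n + 1))).integrable_normSq μ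
      have i2 := (hT.comp (h.2.1 (n + 1))).integrable_normSq μ
      rw [← integral_const_mul, ← integral_const_mul,
        ← integral_add (i1.const_mul 2) (i2.const_mul 2)]
      refine integral_mono (((hy _).comp (h.2.1 _)).integrable_normSq μ)
        ((i1.const_mul 2).add (i2.const_mul 2)) fun ω => ?_
      have h5 := norm_sub_le (y (n + 1) (X (n + 1) ω) + condTail κ y (n + 1) k (X (n + 1) ω))
        (condTail κ y (n + 1) k (X (n + 1) ω))
      rw [add_sub_cancel_right] at h5
      have h6 := pow_le_pow_left₀ (norm_nonneg _) h5 2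
      simp only
      nlinarith [sq_nonneg (‖y (n + 1) (X (n + 1) ω) + condTail κ y (n + 1) k (X (n + 1) ω)‖
        - ‖condTail κ y (n + 1) k (X (n + 1) ω)‖)]
    simp only [condTail, tailSum, ← add_assoc] at h1 h2 ⊢
    set A := ∫ ω, ‖y (n + 1) (X (n + 1) ω) + condTail κ y (n + 1) k (X (n + 1) ω)‖ ^ 2 ∂μ
    set Bq := ∫ ω, ‖∫ u, (y (n + 1) u + condTail κ y (n + 1) k u) ∂κ n (X n ω)‖ ^ 2 ∂μ
    have hA : 0 ≤ A := integral_nonneg fun ω => by positivity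
    have hC0 : C⁻¹ = 4 * (4 * C)⁻¹ := by field_simp
    have hc : 0 < (4 * C)⁻¹ := by positivity
    rw [hC0] at h3
    have hBA : Bq ≤ A := by nlinarith
    nlinarith

/-- The variance of a sum dominates the sum of the variances. -/
theorem tailSum_variance_le (h : UEChain μ X κ C) (hC : 1 < C)
    (hy : ∀ n, BddMeas inferInstance (y n)) (hmean : ∀ n, ∫ ω, y n (X n ω) ∂μ = 0) (n k : ℕ) :
    tailSum (fun m => ∫ ω, ‖y m (X m ω)‖ ^ 2 ∂μ) n k
      ≤ 4 * C * ∫ ω, ‖tailSum (fun m => y m (X m ω)) n k‖ ^ 2 ∂μ := by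
  have h1 := h.le_integral_normSq_tailSum hC hy hmean n k (BddMeas.const 0)
  simp only [zero_add] at h1
  have h2 : 0 ≤ ∫ ω, ‖condTail κ y n k (X n ω)‖ ^ 2 ∂μ := integral_nonneg fun ω => by positivity
  have hc : 0 < 4 * C := by linarith
  rw [← inv_mul_le_iff₀ hc]
  have := inv_pos.2 hc
  nlinarith

end UEChain

theorem hasDerivAt_integral_mul_cexp {α : Type*} {m : MeasurableSpace α} (ν : Measure α)
    [IsFiniteMeasure ν] {W T : α → ℂ} (hW : BddMeas m W) (hT : BddMeas m T) (z : ℂ) :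
    HasDerivAt (fun z : ℂ => ∫ x, W x * Complex.exp (z * T x) ∂ν)
      (∫ x, W x * T x * Complex.exp (z * T x) ∂ν) z := by
  obtain ⟨M, hM⟩ := (hW.mul hT).bdd
  obtain ⟨M', hM'⟩ := hT.bdd
  have hmeas : ∀ w : ℂ, BddMeas m (fun x => Complex.exp (w * T x)) := fun w =>
    ((BddMeas.const w).mul hT).cexp
  refine (hasDerivAt_integral_of_dominated_loc_of_deriv_le (μ := ν)
    (F := fun (w : ℂ) x => W x * Complex.exp (w * T x))
    (F' := fun (w : ℂ) x => W x * T x * Complex.exp (w * T x))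
    (bound := fun _ => M * Real.exp ((‖z‖ + 1) * M')) (Metric.ball_mem_nhds z one_pos)
    (Eventually.of_forall fun w => (hW.mul (hmeas w)).meas.aestronglyMeasurable)
    ((hW.mul (hmeas z)).integrable ν)
    ((hW.mul hT).mul (hmeas z)).meas.aestronglyMeasurable
    (Eventually.of_forall fun x w hw => ?_) (integrable_const _)
    (Eventually.of_forall fun x w _ => ?_)).2
  · rw [norm_mul]
    refine mul_le_mul (hM x) ?_ (norm_nonneg _) ((norm_nonneg _).trans (hM x))
    rw [Complex.norm_exp]
    refine Real.exp_le_exp.2 ((Complex.re_le_norm _).trans ?_)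
    rw [norm_mul]
    have hw' : ‖w‖ ≤ ‖z‖ + 1 := by
      have h1 := norm_sub_norm_le w z
      rw [Metric.mem_ball, dist_eq_norm] at hw
      linarith
    exact mul_le_mul hw' (hM' x) (norm_nonneg _) (by positivity)
  · have h1 : HasDerivAt (fun w : ℂ => w * T x) (T x) w := by
      simpa using (hasDerivAt_id w).mul_const (T x)
    convert! (h1.cexp.const_mul (W x)) using 1
    ring

/-- The conditional expectation of `exp (z (y_{n+1}(X_{n+1}) + ⋯ + y_{n+k}(X_{n+k})))` given
`X_n = x`. -/
def condMGF (κ : ℕ → Kernel E E) (y : ℕ → E → ℂ) (z : ℂ) : ℕ → ℕ → E → ℂ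
  | _, 0 => fun _ => 1
  | n, k + 1 => fun x => ∫ u, Complex.exp (z * y (n + 1) u) * condMGF κ y z (n + 1) k u ∂κ n x

/-- The moment generating function of `y_{n+1}(X_{n+1}) + ⋯ + y_{n+k}(X_{n+k})`. -/
def tailMGF (μ : Measure Ω) (X : ℕ → Ω → E) (y : ℕ → E → ℂ) (n k : ℕ) (z : ℂ) : ℂ :=
  ∫ ω, Complex.exp (z * tailSum (fun m => y m (X m ω)) n k) ∂μ

/-- The variance of `condMGF`. -/
def varMGF (μ : Measure Ω) (X : ℕ → Ω → E) (κ : ℕ → Kernel E E) (y : ℕ → E → ℂ) (n k : ℕ)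
    (z : ℂ) : ℝ :=
  ∫ ω, ‖condMGF κ y z n k (X n ω) - tailMGF μ X y n k z‖ ^ 2 ∂μ

namespace UEChain

variable {μ : Measure Ω} {X : ℕ → Ω → E} {κ : ℕ → Kernel E E} {C : ℝ} {y : ℕ → E → ℂ}

theorem bddMeas_condMGF (h : UEChain μ X κ C) (hy : ∀ n, BddMeas inferInstance (y n)) (z : ℂ)
    (n k : ℕ) : BddMeas inferInstance (condMGF κ y z n k) := by
  have := h.2.2.1
  induction k generalizing n with
  | zero => exact BddMeas.const 1
  | succ k ih =>
    exact (((BddMeas.const z).mul (hy (n + 1))).cexp.mul (ih (n + 1))).kernel (κ n)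

theorem integral_mul_condMGF (h : UEChain μ X κ C) (hy : ∀ n, BddMeas inferInstance (y n)) (z : ℂ)
    (n k : ℕ) {Z : Ω → ℂ} (hZ : BddMeas (past X n) Z) :
    ∫ ω, Z ω * condMGF κ y z n k (X n ω) ∂μ
      = ∫ ω, Z ω * Complex.exp (z * tailSum (fun m => y m (X m ω)) n k) ∂μ := by
  induction k generalizing n Z with
  | zero => simp [condMGF, tailSum]
  | succ k ih =>
    have he : BddMeas inferInstance (fun u => Complex.exp (z * y (n + 1) u)) :=
      ((BddMeas.const z).mul (hy (n + 1))).cexp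
    have hZ' : BddMeas (past X (n + 1))
        (fun ω => Z ω * Complex.exp (z * y (n + 1) (X (n + 1) ω))) :=
      (hZ.mono (past_mono X n)).mul (he.comp (measurable_past X le_rfl))
    simp only [condMGF, tailSum]
    rw [← h.integral_mul_succ n hZ (u := fun u => Complex.exp (z * y (n + 1) u)
      * condMGF κ y z (n + 1) k u) (he.mul (h.bddMeas_condMGF hy z (n + 1) k))]
    simp only [← mul_assoc]
    rw [ih (n + 1) hZ']
    simp only [mul_add, Complex.exp_add, mul_assoc]

theorem integral_condMGF (h : UEChain μ X κ C) (hy : ∀ n, BddMeas inferInstance (y n)) (z : ℂ)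
    (n k : ℕ) : ∫ ω, condMGF κ y z n k (X n ω) ∂μ = tailMGF μ X y n k z := by
  simpa [tailMGF] using h.integral_mul_condMGF hy z n k (BddMeas.const 1)

theorem tailMGF_succ (h : UEChain μ X κ C) (hy : ∀ n, BddMeas inferInstance (y n)) (z : ℂ)
    (n k : ℕ) : tailMGF μ X y n (k + 1) z
      = ∫ ω, Complex.exp (z * y (n + 1) (X (n + 1) ω)) * condMGF κ y z (n + 1) k (X (n + 1) ω) ∂μ := by
  rw [← h.integral_condMGF hy]
  exact h.integral_succ n (u := fun u => Complex.exp (z * y (n + 1) u)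
      * condMGF κ y z (n + 1) k u)
      (((BddMeas.const z).mul (hy (n + 1))).cexp.mul (h.bddMeas_condMGF hy z (n + 1) k))

theorem norm_tailMGF_succ_sub_le (h : UEChain μ X κ C) (hy : ∀ n, BddMeas inferInstance (y n))
    (hmean : ∀ n, ∫ ω, y n (X n ω) ∂μ = 0) {L : ℝ} (hL : ∀ n x, ‖y n x‖ ≤ L) {z : ℂ}
    (hz : ‖z‖ * L ≤ 1) (n k : ℕ) :
    ‖tailMGF μ X y n (k + 1) z - tailMGF μ X y (n + 1) k z‖ * ‖tailMGF μ X y (n + 1) k z‖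
      ≤ 2 * ‖tailMGF μ X y (n + 1) k z‖ ^ 2
          * (‖z‖ ^ 2 * ∫ ω, ‖y (n + 1) (X (n + 1) ω)‖ ^ 2 ∂μ)
        + varMGF μ X κ y (n + 1) k z := by
  have := h.1
  have hy' := (hy (n + 1)).comp (h.2.1 (n + 1))
  have hh := (h.bddMeas_condMGF hy z (n + 1) k).comp (h.2.1 (n + 1))
  have hzy := (BddMeas.const z).mul hy'
  have he := hzy.cexp
  have hmean' := hmean (n + 1)
  have hsucc := h.tailMGF_succ hy z n k
  have hphi := h.integral_condMGF hy z (n + 1) k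
  unfold varMGF
  set φ := tailMGF μ X y (n + 1) k z
  set φ' := tailMGF μ X y n (k + 1) z
  set w : Ω → ℂ := fun ω => y (n + 1) (X (n + 1) ω) with hw
  set H : Ω → ℂ := fun ω => condMGF κ y z (n + 1) k (X (n + 1) ω) with hH
  have hwL : ∀ ω, ‖z * w ω‖ ≤ 1 := fun ω => by
    rw [norm_mul]
    exact (mul_le_mul_of_nonneg_left (hL _ _) (norm_nonneg _)).trans hz
  have hF := (((he.sub (BddMeas.const 1)).mul (hh.sub (BddMeas.const φ))).add
    ((BddMeas.const φ).mul ((he.sub (BddMeas.const 1)).sub hzy)))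
  have e1 : φ' - φ = ∫ ω, ((Complex.exp (z * w ω) - 1) * (H ω - φ)
      + φ * (Complex.exp (z * w ω) - 1 - z * w ω)) ∂μ := by
    have e2 : ∀ ω, (Complex.exp (z * w ω) - 1) * (H ω - φ)
      + φ * (Complex.exp (z * w ω) - 1 - z * w ω)
        = Complex.exp (z * w ω) * H ω - H ω - (φ * z) * w ω := fun ω => by ring
    simp_rw [e2]
    have i1 := (he.mul hh).sub hh
    rw [integral_sub (i1.integrable μ) (((BddMeas.const (φ * z)).mul hy').integrable μ),
      integral_sub ((he.mul hh).integrable μ) (hh.integrable μ), integral_const_mul]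
    simp only [hw, hH] at hmean' hsucc hphi ⊢
    rw [hmean', hphi, ← hsucc]
    ring
  have hi1 := hy'.integrable_normSq μ
  have hi2 := (hh.sub (BddMeas.const φ)).integrable_normSq μ
  rw [e1, ← integral_const_mul, ← integral_const_mul, ← integral_add
    ((hi1.const_mul _).const_mul _) hi2]
  refine (mul_le_mul_of_nonneg_right (norm_integral_le_integral_norm _) (norm_nonneg _)).trans ?_
  rw [← integral_mul_const]
  refine integral_mono (hF.integrable_norm μ |>.mul_const _)
    (((hi1.const_mul _).const_mul _).add hi2) fun ω => ?_
  have b1 := Complex.norm_exp_sub_one_le (hwL ω)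
  have b2 := Complex.norm_exp_sub_one_sub_id_le (hwL ω)
  rw [norm_mul] at b1 b2
  have b3 : ‖(Complex.exp (z * w ω) - 1) * (H ω - φ)
      + φ * (Complex.exp (z * w ω) - 1 - z * w ω)‖
      ≤ 2 * (‖z‖ * ‖w ω‖) * ‖H ω - φ‖ + ‖φ‖ * (‖z‖ * ‖w ω‖) ^ 2 := by
    refine (norm_add_le _ _).trans ?_
    rw [norm_mul, norm_mul]
    gcongr
  refine (mul_le_mul_of_nonneg_right b3 (norm_nonneg _)).trans ?_
  nlinarith [sq_nonneg (‖φ‖ * (‖z‖ * ‖w ω‖) - ‖H ω - φ‖)]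

theorem varMGF_succ_le (h : UEChain μ X κ C) (hC : 1 < C) (hy : ∀ n, BddMeas inferInstance (y n))
    {L e : ℝ} (he0 : 0 < e) (he1 : e ≤ 1) (hL : ∀ n x, ‖y n x‖ ≤ L) {z : ℂ}
    (hz : 2 * (‖z‖ * L) ≤ e) (n k : ℕ) :
    varMGF μ X κ y n (k + 1) z ≤ (1 - C⁻¹) * ((1 + e) ^ 3 * varMGF μ X κ y (n + 1) k z
      + 4 * (1 + e⁻¹) * ‖tailMGF μ X y (n + 1) k z‖ ^ 2
          * (‖z‖ ^ 2 * ∫ ω, ‖y (n + 1) (X (n + 1) ω)‖ ^ 2 ∂μ)) := by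
  have := h.1
  have := h.2.2.1
  have hy' := (hy (n + 1)).comp (h.2.1 (n + 1))
  have hh0 := h.bddMeas_condMGF hy z (n + 1) k
  have hh := hh0.comp (h.2.1 (n + 1))
  have hg := ((BddMeas.const z).mul (hy (n + 1))).cexp.mul hh0
  have hgX := hg.comp (h.2.1 (n + 1))
  have hsucc := h.tailMGF_succ hy z n k
  unfold varMGF
  set φ := tailMGF μ X y (n + 1) k z
  set φ' := tailMGF μ X y n (k + 1) z
  have hgap := h.spectral_gap hC n (hg.sub (BddMeas.const φ')) (by
    rw [integral_sub (hgX.integrable μ) (integrable_const _), ← hsucc]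
    simp)
  have hQ : ∀ ω, ∫ u, (Complex.exp (z * y (n + 1) u) * condMGF κ y z (n + 1) k u - φ') ∂κ n (X n ω)
      = condMGF κ y z n (k + 1) (X n ω) - φ' := fun ω => by
    rw [integral_sub (hg.integrable _) (integrable_const _)]
    simp [condMGF]
  simp_rw [hQ] at hgap
  refine hgap.trans (mul_le_mul_of_nonneg_left ?_ (by
    rw [sub_nonneg]; exact inv_le_one_of_one_le₀ hC.le))
  have hmin : ∫ ω, ‖Complex.exp (z * y (n + 1) (X (n + 1) ω))
      * condMGF κ y z (n + 1) k (X (n + 1) ω) - φ'‖ ^ 2 ∂μ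
      ≤ ∫ ω, ‖Complex.exp (z * y (n + 1) (X (n + 1) ω))
      * condMGF κ y z (n + 1) k (X (n + 1) ω) - φ‖ ^ 2 ∂μ := by
    rw [integral_normSq_sub_const μ hgX, integral_normSq_sub_const μ hgX, ← hsucc]
    have h1 := Complex.normSq_sub φ φ'
    have h2 := Complex.normSq_nonneg (φ - φ')
    rw [Complex.conj_mul', ← Complex.ofReal_pow, Complex.ofReal_re]
    rw [← Complex.sq_norm] at h1 h2
    rw [← Complex.sq_norm, ← Complex.sq_norm] at h1
    have h3 : (φ * starRingEnd ℂ φ').re = (starRingEnd ℂ φ * φ').re := by simp [Complex.mul_re]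
    rw [h3] at h1
    linarith
  refine hmin.trans ?_
  have hi1 := hy'.integrable_normSq μ
  have hi2 := (hh.sub (BddMeas.const φ)).integrable_normSq μ
  rw [← integral_const_mul, ← integral_const_mul, ← integral_const_mul, ← integral_add
    (hi2.const_mul _) ((hi1.const_mul _).const_mul _)]
  refine integral_mono ((hgX.sub (BddMeas.const φ)).integrable_normSq μ)
    ((hi2.const_mul _).add ((hi1.const_mul _).const_mul _)) fun ω => ?_
  simp only
  set w := y (n + 1) (X (n + 1) ω) with hw
  set H := condMGF κ y z (n + 1) k (X (n + 1) ω)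
  have hzw : ‖z * w‖ ≤ e / 2 := by
    rw [norm_mul]
    have := mul_le_mul_of_nonneg_left (hL (n + 1) (X (n + 1) ω)) (norm_nonneg z)
    linarith
  have b1 := Complex.norm_exp_sub_one_le (x := z * w) (by linarith)
  have b2 : ‖Complex.exp (z * w)‖ ≤ 1 + e := by
    have := norm_sub_norm_le (Complex.exp (z * w)) 1
    rw [norm_one] at this
    linarith
  have b3 : ‖Complex.exp (z * w) * H - φ‖ ≤ (1 + e) * ‖H - φ‖ + 2 * (‖z‖ * ‖w‖) * ‖φ‖ := by
    have e1 : Complex.exp (z * w) * H - φ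
      = Complex.exp (z * w) * (H - φ) + (Complex.exp (z * w) - 1) * φ := by ring
    rw [e1]
    refine (norm_add_le _ _).trans ?_
    rw [norm_mul, norm_mul]
    rw [norm_mul] at b1
    gcongr
  refine (pow_le_pow_left₀ (norm_nonneg _) b3 2).trans ?_
  have b4 : ∀ a b : ℝ, (a + b) ^ 2 ≤ (1 + e) * a ^ 2 + (1 + e⁻¹) * b ^ 2 := fun a b => by
    have h1 : e * e⁻¹ = 1 := mul_inv_cancel₀ he0.ne'
    have h2 : 0 < e⁻¹ := inv_pos.2 he0
    have h3 : 0 ≤ e⁻¹ * (e * a - b) ^ 2 := by positivity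
    have h4 : e⁻¹ * (e * a - b) ^ 2 = (e * e⁻¹) * (e * a ^ 2) - 2 * (e * e⁻¹) * (a * b)
      + e⁻¹ * b ^ 2 := by ring
    rw [h4, h1] at h3
    linarith
  refine (b4 _ _).trans (le_of_eq ?_)
  ring

end UEChain

/-- One step of the recursion controlling the relative variance `d / p ^ 2`. -/
theorem relative_variance_step {e p p' d d' a w : ℝ} (he0 : 0 < e) (he1 : e ≤ 1 / 16)
    (hp : 0 < p) (hw0 : 0 ≤ w) (hw : 7 * w ≤ e ^ 3) (hd0 : 0 ≤ d) (hd : d ≤ e * p ^ 2)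
    (ha : a * p ≤ 2 * p ^ 2 * w + d) (hp' : p - a ≤ p')
    (hd' : d' ≤ (1 - 16 * e) * ((1 + e) ^ 3 * d + 4 * (1 + e⁻¹) * p ^ 2 * w)) :
    a / p ≤ 2 * w + d / p ^ 2 ∧ 2 * w + d / p ^ 2 ≤ 1 / 2 ∧ 0 < p' ∧ d' ≤ e * p' ^ 2 ∧
      d' / p' ^ 2 ≤ (1 - e) * (d / p ^ 2) + 7 / e * w := by
  obtain ⟨R, rfl⟩ : ∃ R, d = R * p ^ 2 := ⟨d / p ^ 2, by field_simp⟩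
  have hp2 : 0 < p ^ 2 := by positivity
  have hR0 : 0 ≤ R := by
    by_contra hneg
    push Not at hneg
    nlinarith
  have hRe : R ≤ e := le_of_mul_le_mul_right hd hp2
  have hRd : R * p ^ 2 / p ^ 2 = R := by field_simp
  have hwe : 2 * w ≤ e := by nlinarith [pow_pos he0 2]
  have ha' : a ≤ (2 * w + R) * p := by
    refine le_of_mul_le_mul_right (ha.trans (le_of_eq ?_)) hp
    ring
  have hpp : (1 - 2 * e) * p ≤ p' := by nlinarith
  have hpp0 : 0 < p' := lt_of_lt_of_le (by apply mul_pos <;> linarith) hpp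
  have hsq : (1 - 2 * e) ^ 2 * p ^ 2 ≤ p' ^ 2 := by
    rw [← mul_pow]
    exact pow_le_pow_left₀ (mul_nonneg (by linarith) hp.le) hpp 2
  have hei : e * e⁻¹ = 1 := mul_inv_cancel₀ he0.ne'
  have hei0 : 0 < e⁻¹ := inv_pos.2 he0
  have c1 : (1 - 16 * e) * (1 + e) ^ 3 ≤ (1 - e) * (1 - 2 * e) ^ 2 := by
    have h2 := pow_pos he0 2
    have h3 := pow_pos he0 3
    have h4 := pow_pos he0 4
    nlinarith
  have c2 : (1 - 16 * e) * (4 * (1 + e⁻¹)) ≤ 7 * e⁻¹ * (1 - 2 * e) ^ 2 := by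
    have h1 : (1 - 16 * e) * (4 * (1 + e⁻¹)) = 4 + 4 * e⁻¹ - 64 * e - 64 * (e * e⁻¹) := by ring
    have h2 : 7 * e⁻¹ * (1 - 2 * e) ^ 2 = 7 * e⁻¹ - 28 * (e * e⁻¹) + 28 * (e * e⁻¹) * e := by ring
    rw [h1, h2, hei]
    nlinarith
  have hfin : d' ≤ ((1 - e) * R + 7 / e * w) * p' ^ 2 := by
    have hb : 0 ≤ (1 - e) * R + 7 / e * w := by
      have : 0 ≤ (1 - e) * R := mul_nonneg (by linarith) hR0
      positivity
    refine hd'.trans (le_trans ?_ (mul_le_mul_of_nonneg_left hsq hb))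
    have h1 : (1 - 16 * e) * ((1 + e) ^ 3 * (R * p ^ 2) + 4 * (1 + e⁻¹) * p ^ 2 * w)
      = ((1 - 16 * e) * (1 + e) ^ 3) * (R * p ^ 2)
        + ((1 - 16 * e) * (4 * (1 + e⁻¹))) * (p ^ 2 * w) := by ring
    have h2 : ((1 - e) * R + 7 / e * w) * ((1 - 2 * e) ^ 2 * p ^ 2)
      = ((1 - e) * (1 - 2 * e) ^ 2) * (R * p ^ 2)
        + (7 * e⁻¹ * (1 - 2 * e) ^ 2) * (p ^ 2 * w) := by
      rw [div_eq_mul_inv]; ring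
    rw [h1, h2]
    gcongr
  have hcont : (1 - e) * R + 7 / e * w ≤ e := by
    have h1 : 7 / e * w ≤ e ^ 2 := by
      rw [div_mul_eq_mul_div, div_le_iff₀ he0]
      nlinarith
    nlinarith
  rw [hRd]
  refine ⟨?_, by linarith, hpp0, hfin.trans (mul_le_mul_of_nonneg_right hcont (by positivity)), ?_⟩
  · rwa [div_le_iff₀ hp]
  · rwa [div_le_iff₀ (by positivity)]

/-- The logarithm of `tailMGF`, as a sum of logarithms of successive ratios. -/
def logMGF (μ : Measure Ω) (X : ℕ → Ω → E) (y : ℕ → E → ℂ) : ℕ → ℕ → ℂ → ℂ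
  | _, 0 => fun _ => 0
  | n, k + 1 => fun z => logMGF μ X y (n + 1) k z
      + Complex.log (tailMGF μ X y n (k + 1) z / tailMGF μ X y (n + 1) k z)

theorem logMGF_zero {F : Type*} (μ : Measure Ω) [IsProbabilityMeasure μ] (X : ℕ → Ω → F)
    (y : ℕ → F → ℂ) (n k : ℕ) : logMGF μ X y n k 0 = 0 := by
  induction k generalizing n with
  | zero => rfl
  | succ k ih => simp [logMGF, ih, tailMGF]

namespace UEChain

variable {μ : Measure Ω} {X : ℕ → Ω → E} {κ : ℕ → Kernel E E} {C : ℝ} {y : ℕ → E → ℂ}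

theorem tailMGF_step (h : UEChain μ X κ C) (hC : 1 < C) (hy : ∀ n, BddMeas inferInstance (y n))
    (hmean : ∀ n, ∫ ω, y n (X n ω) ∂μ = 0) {L e : ℝ} (he : e = C⁻¹ / 16)
    (hL : ∀ n x, ‖y n x‖ ≤ L) {z : ℂ} (hz : ‖z‖ * L ≤ e ^ 2 / 4) (n k : ℕ)
    (hφ : tailMGF μ X y (n + 1) k z ≠ 0)
    (hD : varMGF μ X κ y (n + 1) k z ≤ e * ‖tailMGF μ X y (n + 1) k z‖ ^ 2) :
    ‖tailMGF μ X y n (k + 1) z / tailMGF μ X y (n + 1) k z - 1‖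
        ≤ 2 * (‖z‖ ^ 2 * ∫ ω, ‖y (n + 1) (X (n + 1) ω)‖ ^ 2 ∂μ)
          + varMGF μ X κ y (n + 1) k z / ‖tailMGF μ X y (n + 1) k z‖ ^ 2 ∧
      2 * (‖z‖ ^ 2 * ∫ ω, ‖y (n + 1) (X (n + 1) ω)‖ ^ 2 ∂μ)
          + varMGF μ X κ y (n + 1) k z / ‖tailMGF μ X y (n + 1) k z‖ ^ 2 ≤ 1 / 2 ∧
      tailMGF μ X y n (k + 1) z ≠ 0 ∧
      varMGF μ X κ y n (k + 1) z ≤ e * ‖tailMGF μ X y n (k + 1) z‖ ^ 2 ∧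
      varMGF μ X κ y n (k + 1) z / ‖tailMGF μ X y n (k + 1) z‖ ^ 2
        ≤ (1 - e) * (varMGF μ X κ y (n + 1) k z / ‖tailMGF μ X y (n + 1) k z‖ ^ 2)
          + 7 / e * (‖z‖ ^ 2 * ∫ ω, ‖y (n + 1) (X (n + 1) ω)‖ ^ 2 ∂μ) := by
  have := h.1
  have hCi : 0 < C⁻¹ := by positivity
  have hCi1 : C⁻¹ ≤ 1 := inv_le_one_of_one_le₀ hC.le
  have he0 : 0 < e := by rw [he]; positivity
  have he1 : e ≤ 1 / 16 := by rw [he]; linarith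
  have hee : e ^ 2 ≤ e / 16 := by nlinarith
  have h1 := h.norm_tailMGF_succ_sub_le hy hmean hL (z := z) (by linarith) n k
  have h2 := h.varMGF_succ_le hC hy he0 (by linarith) hL (z := z) (by linarith) n k
  have hC16 : C⁻¹ = 16 * e := by rw [he]; ring
  rw [hC16] at h2
  have hL0 : 0 ≤ ‖z‖ * L := by
    obtain ⟨ω⟩ : Nonempty Ω := nonempty_of_isProbabilityMeasure μ
    exact mul_nonneg (norm_nonneg z) ((norm_nonneg _).trans (hL 0 (X 0 ω)))
  have hv : ‖z‖ ^ 2 * ∫ ω, ‖y (n + 1) (X (n + 1) ω)‖ ^ 2 ∂μ ≤ (‖z‖ * L) ^ 2 := by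
    rw [mul_pow]
    refine mul_le_mul_of_nonneg_left ?_ (by positivity)
    have := integral_mono (((hy (n + 1)).comp (h.2.1 (n + 1))).integrable_normSq μ)
      (integrable_const (L ^ 2)) fun ω => pow_le_pow_left₀ (norm_nonneg _) (hL _ _) 2
    simpa using this
  have hw : 7 * (‖z‖ ^ 2 * ∫ ω, ‖y (n + 1) (X (n + 1) ω)‖ ^ 2 ∂μ) ≤ e ^ 3 := by
    have h3 := pow_le_pow_left₀ hL0 hz 2
    have h4 : (e ^ 2 / 4) ^ 2 = e ^ 3 * (e / 16) := by ring
    have h5 := pow_pos he0 3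
    nlinarith
  have hφ0 : 0 < ‖tailMGF μ X y (n + 1) k z‖ := norm_pos_iff.2 hφ
  obtain ⟨r1, r2, r3, r4, r5⟩ := relative_variance_step he0 he1 hφ0
    (mul_nonneg (by positivity) (integral_nonneg fun ω => by positivity)) hw
    (integral_nonneg fun ω => by positivity) hD h1 (p' := ‖tailMGF μ X y n (k + 1) z‖) (by
      have := norm_sub_norm_le (tailMGF μ X y (n + 1) k z) (tailMGF μ X y n (k + 1) z)
      rw [norm_sub_rev] at this
      linarith) h2
  refine ⟨?_, r2, norm_pos_iff.1 r3, r4, r5⟩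
  rwa [div_sub_one hφ, norm_div]

theorem logMGF_bound (h : UEChain μ X κ C) (hC : 1 < C) (hy : ∀ n, BddMeas inferInstance (y n))
    (hmean : ∀ n, ∫ ω, y n (X n ω) ∂μ = 0) {L e : ℝ} (he : e = C⁻¹ / 16)
    (hL : ∀ n x, ‖y n x‖ ≤ L) {z : ℂ} (hz : ‖z‖ * L ≤ e ^ 2 / 4) (n k : ℕ) :
    tailMGF μ X y n k z ≠ 0 ∧
      varMGF μ X κ y n k z ≤ e * ‖tailMGF μ X y n k z‖ ^ 2 ∧
      Complex.exp (logMGF μ X y n k z) = tailMGF μ X y n k z ∧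
      ‖logMGF μ X y n k z‖ + 2 / e * (varMGF μ X κ y n k z / ‖tailMGF μ X y n k z‖ ^ 2)
        ≤ (3 + 14 / e ^ 2) * (‖z‖ ^ 2 * tailSum (fun m => ∫ ω, ‖y m (X m ω)‖ ^ 2 ∂μ) n k) := by
  have := h.1
  have hCi : 0 < C⁻¹ := by positivity
  have he0 : 0 < e := by rw [he]; positivity
  induction k generalizing n with
  | zero => simp [tailMGF, varMGF, condMGF, logMGF, tailSum, he0.le]
  | succ k ih =>
    obtain ⟨i1, i2, i3, i4⟩ := ih (n + 1)
    obtain ⟨r1, r2, r3, r4, r5⟩ := h.tailMGF_step hC hy hmean he hL hz n k i1 i2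
    refine ⟨r3, r4, ?_, ?_⟩
    · rw [logMGF, Complex.exp_add, i3, Complex.exp_log (div_ne_zero r3 i1)]
      field_simp
    · have hlog := Complex.norm_log_one_add_half_le_self (r1.trans r2)
      rw [add_sub_cancel] at hlog
      simp only [logMGF, tailSum]
      have hn := norm_add_le (logMGF μ X y (n + 1) k z)
        (Complex.log (tailMGF μ X y n (k + 1) z / tailMGF μ X y (n + 1) k z))
      set R := varMGF μ X κ y (n + 1) k z / ‖tailMGF μ X y (n + 1) k z‖ ^ 2
      set R' := varMGF μ X κ y n (k + 1) z / ‖tailMGF μ X y n (k + 1) z‖ ^ 2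
      set w := ‖z‖ ^ 2 * ∫ ω, ‖y (n + 1) (X (n + 1) ω)‖ ^ 2 ∂μ with hw
      have hR0 : 0 ≤ R := div_nonneg (integral_nonneg fun ω => by positivity) (by positivity)
      have h5 : 2 / e * R' ≤ 2 / e * R - 2 * R + 14 / e ^ 2 * w := by
        refine (mul_le_mul_of_nonneg_left r5 (by positivity)).trans (le_of_eq ?_)
        field_simp
        ring
      rw [mul_add, mul_add, ← hw]
      nlinarith

theorem differentiable_tailMGF (h : UEChain μ X κ C) (hy : ∀ n, BddMeas inferInstance (y n))
    (n k : ℕ) : Differentiable ℂ (tailMGF μ X y n k) := by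
  have := h.1
  intro z
  have := hasDerivAt_integral_mul_cexp μ (BddMeas.const 1) (h.bddMeas_tailSum hy n k) z
  simp only [one_mul] at this
  exact this.differentiableAt

theorem differentiableOn_logMGF (h : UEChain μ X κ C) (hC : 1 < C)
    (hy : ∀ n, BddMeas inferInstance (y n)) (hmean : ∀ n, ∫ ω, y n (X n ω) ∂μ = 0) {L e : ℝ}
    (he : e = C⁻¹ / 16) (hL : ∀ n x, ‖y n x‖ ≤ L) (n k : ℕ) :
    DifferentiableOn ℂ (logMGF μ X y n k) {z | ‖z‖ * L ≤ e ^ 2 / 4} := by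
  induction k generalizing n with
  | zero => exact differentiableOn_const 0
  | succ k ih =>
    refine (ih (n + 1)).add (DifferentiableOn.clog ?_ fun z hz => ?_)
    · exact (h.differentiable_tailMGF hy n (k + 1)).differentiableOn.div
        (h.differentiable_tailMGF hy (n + 1) k).differentiableOn
        fun z hz => (h.logMGF_bound hC hy hmean he hL hz (n + 1) k).1
    · obtain ⟨i1, i2, _, _⟩ := h.logMGF_bound hC hy hmean he hL hz (n + 1) k
      obtain ⟨r1, r2, _, _, _⟩ := h.tailMGF_step hC hy hmean he hL hz n k i1 i2
      have hlt : ‖tailMGF μ X y n (k + 1) z / tailMGF μ X y (n + 1) k z - 1‖ < 1 := by linarith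
      simpa using Complex.mem_slitPlane_of_norm_lt_one hlt

end UEChain

section Centering

variable {μ : Measure Ω} {X : ℕ → Ω → E} {κ : ℕ → Kernel E E} {C : ℝ} {f : ℕ → E → ℤ} {K : ℕ}

theorem integrable_summand [IsFiniteMeasure μ] (hX : ∀ n, Measurable (X n))
    (hf : ∀ n, Measurable (f n)) (hbound : ∀ n ω, |f n (X n ω)| ≤ (K : ℤ)) (n : ℕ) :
    Integrable (fun ω => (f n (X n ω) : ℝ)) μ := by
  refine Integrable.of_bound (C := K)
    ((measurable_from_top (f := fun j : ℤ => (j : ℝ))).comp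
      ((hf n).comp (hX n))).aestronglyMeasurable (Eventually.of_forall fun ω => ?_)
  rw [Real.norm_eq_abs]
  exact_mod_cast hbound n ω

theorem meanS_eq_sum [IsFiniteMeasure μ] (hX : ∀ n, Measurable (X n))
    (hf : ∀ n, Measurable (f n)) (hbound : ∀ n ω, |f n (X n ω)| ≤ (K : ℤ)) (N : ℕ) :
    meanS μ X f N = ∑ n ∈ Finset.Icc 1 N, ∫ ω, (f n (X n ω) : ℝ) ∂μ := by
  simp only [meanS, S, Int.cast_sum]
  exact integral_finsetSum _ fun n _ => integrable_summand hX hf hbound n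

/-- Centred real-valued observables with the same partial sums as `f`, bounded on the whole
state space. -/
theorem exists_centered (h : UEChain μ X κ C) (hf : ∀ n, Measurable (f n))
    (hbound : ∀ n ω, |f n (X n ω)| ≤ (K : ℤ)) :
    ∃ y : ℕ → E → ℂ, (∀ n, BddMeas inferInstance (y n)) ∧ (∀ n x, ‖y n x‖ ≤ 2 * K) ∧
      (∀ n, ∫ ω, y n (X n ω) ∂μ = 0) ∧
      ∀ N ω, tailSum (fun m => y m (X m ω)) 0 N = (((S X f N ω : ℝ) - meanS μ X f N : ℝ) : ℂ) := by
  have := h.1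
  have hinteg := integrable_summand (μ := μ) h.2.1 hf hbound
  set c : ℕ → ℝ := fun n => ∫ ω, (f n (X n ω) : ℝ) ∂μ with hc
  set clip : ℤ → ℤ := fun j => max (-(K : ℤ)) (min K j) with hclip
  have hclipK : ∀ j, |clip j| ≤ K := fun j => by
    rw [hclip, abs_le]
    exact ⟨le_max_left _ _, max_le (by omega) (min_le_left _ _)⟩
  have hclipf : ∀ n ω, clip (f n (X n ω)) = f n (X n ω) := fun n ω => by
    have := abs_le.1 (hbound n ω)
    simp only [hclip]
    rw [min_eq_right this.2, max_eq_right this.1]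
  have hcK : ∀ n, |c n| ≤ K := fun n => by
    have := norm_integral_le_of_norm_le_const (μ := μ) (f := fun ω => (f n (X n ω) : ℝ)) (C := K)
      (Eventually.of_forall fun ω => by
        rw [Real.norm_eq_abs]
        exact_mod_cast hbound n ω)
    simpa using this
  have hyL : ∀ n x, ‖(((clip (f n x) : ℝ) - c n : ℝ) : ℂ)‖ ≤ 2 * K := fun n x => by
    rw [Complex.norm_real, Real.norm_eq_abs]
    have h1 : |(clip (f n x) : ℝ)| ≤ K := by exact_mod_cast hclipK (f n x)
    have h2 := abs_sub (clip (f n x) : ℝ) (c n)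
    linarith [hcK n]
  refine ⟨fun n x => (((clip (f n x) : ℝ) - c n : ℝ) : ℂ), fun n => ⟨?_, 2 * K, hyL n⟩, hyL,
    fun n => ?_, fun N ω => ?_⟩
  · exact ((measurable_from_top (f := fun j : ℤ => (((clip j : ℝ) - c n : ℝ) : ℂ))).comp
      (hf n)).stronglyMeasurable
  · simp only [hclipf]
    rw [integral_complex_ofReal, integral_sub (hinteg n) (integrable_const _)]
    simp [hc]
  · rw [tailSum_zero_eq_sum_Icc, meanS_eq_sum h.2.1 hf hbound]
    simp only [hclipf, S]
    push_cast
    rw [Finset.sum_sub_distrib]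

/-- The moment generating function of the centred sum, in the form required for the Edgeworth
expansion, on a disc that does not depend on `N`. -/
theorem exists_mgf_expansion (h : UEChain μ X κ C) (hC : 1 < C) (hK : 1 ≤ K)
    (hf : ∀ n, Measurable (f n)) (hbound : ∀ n ω, |f n (X n ω)| ≤ (K : ℤ)) :
    ∃ ρ A : ℝ, 0 < ρ ∧ 2 / ρ ≤ A ∧ 1 ≤ A ∧ ∀ N, 0 < VN μ X f N → ∃ q : ℂ → ℂ,
      DifferentiableOn ℂ q (Metric.ball 0 ρ) ∧ (∀ z ∈ Metric.ball (0 : ℂ) ρ, ‖q z‖ ≤ A) ∧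
      ∀ z ∈ Metric.ball (0 : ℂ) ρ,
        ∫ ω, Complex.exp (z * (((S X f N ω : ℝ) - meanS μ X f N : ℝ) : ℂ)) ∂μ
          = Complex.exp (VN μ X f N * z ^ 2 / 2 + VN μ X f N * z ^ 3 * q z) := by
  have := h.1
  obtain ⟨y, hy, hyL, hmean, hsum⟩ := exists_centered h hf hbound
  set e : ℝ := C⁻¹ / 16 with he
  have hCi : 0 < C⁻¹ := by positivity
  have he0 : 0 < e := by positivity
  have hK0 : (0 : ℝ) < K := by exact_mod_cast hK
  set ρ : ℝ := e ^ 2 / (8 * K) with hρ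
  have hρ0 : 0 < ρ := by positivity
  set B : ℝ := (3 + 14 / e ^ 2) * (ρ ^ 2 * (4 * C)) with hB
  refine ⟨ρ, max 1 (max (2 / ρ) (B * (2 / ρ) ^ 3)), hρ0,
    (le_max_left _ _).trans (le_max_right _ _), le_max_left _ _, fun N hVN => ?_⟩
  set T : Ω → ℂ := fun ω => (((S X f N ω : ℝ) - meanS μ X f N : ℝ) : ℂ) with hT
  have hTb : BddMeas inferInstance T := by
    have := h.bddMeas_tailSum hy 0 N
    simpa only [hsum] using this
  have hV : ∫ ω, T ω ^ 2 ∂μ = (VN μ X f N : ℂ) := by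
    have hae : AEMeasurable (fun ω => (S X f N ω : ℝ)) μ := by
      have := (Complex.measurable_re.comp hTb.meas.measurable).add_const (meanS μ X f N)
      refine this.aemeasurable.congr (Eventually.of_forall fun ω => ?_)
      simp [hT]
    rw [VN, variance_eq_integral hae, ← integral_complex_ofReal]
    simp only [hT, meanS]
    push_cast
    rfl
  have hV2 : ∫ ω, ‖T ω‖ ^ 2 ∂μ = VN μ X f N := by
    have h1 : ∀ ω, T ω ^ 2 = ((‖T ω‖ ^ 2 : ℝ) : ℂ) := fun ω => by
      simp only [hT]
      rw [Complex.norm_real, Real.norm_eq_abs, sq_abs]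
      push_cast
      rfl
    simp_rw [h1] at hV
    rw [integral_complex_ofReal] at hV
    exact_mod_cast hV
  have hball : ∀ z ∈ Metric.ball (0 : ℂ) ρ, ‖z‖ * (2 * K) ≤ e ^ 2 / 4 := fun z hz => by
    have hz' : ‖z‖ < e ^ 2 / (8 * K) := by simpa using hz
    rw [lt_div_iff₀ (by positivity)] at hz'
    linarith
  set Λ := logMGF μ X y 0 N with hΛ
  have hmgf : ∀ z, tailMGF μ X y 0 N z = ∫ ω, Complex.exp (z * T ω) ∂μ := fun z => by
    simp only [tailMGF, hsum, hT]
  have hd : DifferentiableOn ℂ Λ (Metric.ball 0 ρ) :=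
    (h.differentiableOn_logMGF hC hy hmean he hyL 0 N).mono hball
  have hΛB : ∀ z ∈ Metric.ball (0 : ℂ) ρ, ‖Λ z‖ ≤ B * VN μ X f N := fun z hz => by
    obtain ⟨-, -, -, h4⟩ := h.logMGF_bound hC hy hmean he hyL (hball z hz) 0 N
    have h5 := h.tailSum_variance_le hC hy hmean 0 N
    simp only [hsum] at h5
    rw [show (∫ ω, ‖(((S X f N ω : ℝ) - meanS μ X f N : ℝ) : ℂ)‖ ^ 2 ∂μ) = VN μ X f N
      from hV2] at h5
    have h6 : 0 ≤ 2 / e * (varMGF μ X κ y 0 N z / ‖tailMGF μ X y 0 N z‖ ^ 2) :=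
      mul_nonneg (by positivity)
        (div_nonneg (integral_nonneg fun ω => by positivity) (by positivity))
    have h7 : ‖z‖ ^ 2 ≤ ρ ^ 2 := by
      have hz' : ‖z‖ < ρ := by simpa using hz
      exact pow_le_pow_left₀ (norm_nonneg _) hz'.le 2
    calc ‖Λ z‖ ≤ _ := (le_add_of_nonneg_right h6).trans h4
      _ ≤ (3 + 14 / e ^ 2) * (ρ ^ 2 * (4 * C * VN μ X f N)) := by
        gcongr
        exact tailSum_nonneg (fun i => integral_nonneg fun ω => by positivity) 0 N
      _ = B * VN μ X f N := by rw [hB]; ring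
  have hq := taylorQuotient_bound hρ0 hd hΛB 3
  have hφ := fun z => hasDerivAt_integral_mul_cexp μ (BddMeas.const 1) hTb z
  have hφ₁ := hasDerivAt_integral_mul_cexp μ hTb hTb 0
  simp only [one_mul] at hφ
  have hexp : ∀ z ∈ Metric.ball (0 : ℂ) ρ, Complex.exp (Λ z) = ∫ ω, Complex.exp (z * T ω) ∂μ :=
    fun z hz => by
      rw [← hmgf]
      exact (h.logMGF_bound hC hy hmean he hyL (hball z hz) 0 N).2.2.1
  have hT0 : ∫ ω, T ω ∂μ = 0 := by
    simp only [hT, ← hsum, tailSum_zero_eq_sum_Icc]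
    rw [integral_finsetSum _ fun n _ => ((hy n).comp (h.2.1 n)).integrable μ]
    exact Finset.sum_eq_zero fun n _ => hmean n
  have hlog := log_expansion hρ0 hd (logMGF_zero μ X y 0 N) hexp hφ (V := VN μ X f N)
    (by simpa using hT0) (by simpa [← pow_two, hV] using hφ₁)
  have hVne : (VN μ X f N : ℂ) ≠ 0 := by exact_mod_cast hVN.ne'
  refine ⟨fun z => taylorQuotient Λ 3 z / VN μ X f N, hq.1.div_const _, fun z hz => ?_,
    fun z hz => ?_⟩
  · refine le_trans ?_ ((le_max_right _ _).trans (le_max_right _ _))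
    rw [norm_div, Complex.norm_real, Real.norm_of_nonneg hVN.le, div_le_iff₀ hVN]
    exact (hq.2 z hz).trans (le_of_eq (by ring))
  · rw [← hexp z hz, hlog z]
    congr 1
    field_simp

end Centering

theorem exists_edgePoly_bounds (r : ℕ) (A : ℝ) : ∃ (D : ℕ) (Cb : ℝ), 0 ≤ Cb ∧
    ∀ (q : ℂ → ℂ) (ρ : ℝ), 0 < ρ → 2 / ρ ≤ A → 1 ≤ A →
      DifferentiableOn ℂ q (Metric.ball 0 ρ) → (∀ z ∈ Metric.ball (0 : ℂ) ρ, ‖q z‖ ≤ A) →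
      ∀ b < r, (edgePoly q b).natDegree ≤ D ∧ ∀ i, ‖(edgePoly q b).coeff i‖ ≤ Cb := by
  set H : ℕ → Polynomial ℂ := hermitePoly
  have hH : ∀ j i, ‖(H j).coeff i‖ ≤ ∑ i ∈ (H j).support, ‖(H j).coeff i‖ := fun j i => by
    by_cases hi : i ∈ (H j).support
    · exact Finset.single_le_sum (f := fun i => ‖(H j).coeff i‖) (fun _ _ => norm_nonneg _) hi
    · rw [Polynomial.notMem_support_iff.1 hi, norm_zero]
      exact Finset.sum_nonneg fun _ _ => norm_nonneg _
  refine ⟨∑ j ∈ range (3 * r), (H j).natDegree,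
    r * (|A| ^ r * ∑ j ∈ range (3 * r), ∑ i ∈ (H j).support, ‖(H j).coeff i‖), by positivity,
    fun q ρ hρ hA hA1 hd hq b hb => ?_⟩
  have hmem : ∀ m ∈ range (b + 1), 3 * m + (b - m) ∈ range (3 * r) := fun m hm => by
    rw [Finset.mem_range] at hm ⊢
    omega
  constructor
  · refine Polynomial.natDegree_sum_le_of_forall_le _ _ fun m hm => ?_
    refine (Polynomial.natDegree_C_mul_le _ _).trans ?_
    exact Finset.single_le_sum (f := fun j => (H j).natDegree) (fun _ _ => Nat.zero_le _)
      (hmem m hm)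
  · intro i
    rw [edgePoly, Polynomial.finsetSum_coeff]
    refine (norm_sum_le_of_le _ (f := fun m => _) fun m hm => ?_).trans (b := ∑ m ∈ range (b + 1),
      |A| ^ r * ∑ j ∈ range (3 * r), ∑ i ∈ (H j).support, ‖(H j).coeff i‖) ?_
    · rw [Polynomial.coeff_C_mul, norm_mul, norm_mul, norm_pow, Complex.norm_I, one_pow, mul_one]
      refine mul_le_mul ?_ ((hH _ i).trans (Finset.single_le_sum
        (f := fun j => ∑ i ∈ (H j).support, ‖(H j).coeff i‖)
        (fun _ _ => Finset.sum_nonneg fun _ _ => norm_nonneg _) (hmem m hm)))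
        (norm_nonneg _) (by positivity)
      refine (norm_edgeCoeff_le hρ hA hd hq m (b - m)).trans ?_
      rw [abs_of_nonneg (by linarith)]
      rw [Finset.mem_range] at hm
      exact pow_le_pow_right₀ hA1 (by omega)
    · rw [Finset.sum_const, Finset.card_range, nsmul_eq_mul]
      refine mul_le_mul_of_nonneg_right ?_ (by positivity)
      exact_mod_cast hb

theorem exists_polynomial_re (p : Polynomial ℂ) : ∃ P : Polynomial ℝ, P.natDegree ≤ p.natDegree ∧
    (∀ i, |P.coeff i| ≤ ‖p.coeff i‖) ∧ ∀ x : ℝ, P.eval x = (p.eval (x : ℂ)).re := by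
  have hco : ∀ i, (∑ j ∈ range (p.natDegree + 1), Polynomial.monomial j (p.coeff j).re).coeff i
      = (p.coeff i).re := fun i => by
    rw [Polynomial.finsetSum_coeff]
    simp only [Polynomial.coeff_monomial, Finset.sum_ite_eq', Finset.mem_range]
    split_ifs with hi
    · rfl
    · rw [Polynomial.coeff_eq_zero_of_natDegree_lt (by omega)]
      rfl
  refine ⟨∑ j ∈ range (p.natDegree + 1), Polynomial.monomial j (p.coeff j).re,
    Polynomial.natDegree_sum_le_of_forall_le _ _ fun j hj =>
      (Polynomial.natDegree_monomial_le _).trans (by rw [Finset.mem_range] at hj; omega),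
    fun i => ?_, fun x => ?_⟩
  · rw [hco]
    exact Complex.abs_re_le_norm _
  · rw [Polynomial.eval_finsetSum, Polynomial.eval_eq_sum_range, Complex.re_sum]
    refine Finset.sum_congr rfl fun j _ => ?_
    rw [Polynomial.eval_monomial, ← Complex.ofReal_pow, Complex.re_mul_ofReal]

/-- Integrals over symmetric intervals of functions with Hermitian symmetry are real. -/
theorem conj_integral_of_hermitian {F : ℝ → ℂ} (hF : ∀ t, starRingEnd ℂ (F t) = F (-t)) (δ : ℝ) :
    starRingEnd ℂ (∫ t in (-δ)..δ, F t) = ∫ t in (-δ)..δ, F t := by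
  have h1 : starRingEnd ℂ (∫ t in (-δ)..δ, F t) = ∫ t in (-δ)..δ, starRingEnd ℂ (F t) := by
    simp only [intervalIntegral, map_sub, integral_conj]
  rw [h1]
  simp_rw [hF]
  simp [intervalIntegral.integral_comp_neg]

theorem norm_sub_re_le {I J : ℂ} (hI : starRingEnd ℂ I = I) : ‖I - (J.re : ℂ)‖ ≤ ‖I - J‖ := by
  rw [← Complex.conj_eq_iff_re.1 hI, ← Complex.ofReal_sub, Complex.norm_real, Real.norm_eq_abs]
  simpa using Complex.abs_re_le_norm ((I.re : ℂ) - J)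

/-- Proposition 4.1. There are polynomials `P_{0,b,N}` with coefficients
uniformly bounded in `N` such that, for every `r ≥ 1`, if `δ > 0` is small enough then,
uniformly in `k ∈ ℤ`,
`∫_{-δ}^{δ} e^{-itk} 𝔼(e^{itS_N}) dt
  = ∑_{b=1}^r σ_N^{-b} P_{0,b,N}((k-a_N)/σ_N) 𝔤((k-a_N)/σ_N) + o(σ_N^{-r})`. -/
theorem contribution_of_zero
    (μ : Measure Ω) (X : ℕ → Ω → E) (κ : ℕ → Kernel E E) (f : ℕ → E → ℤ)
    (C : ℝ) (K : ℕ) (hC : 1 < C) (hK : 1 ≤ K)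
    (hchain : UEChain μ X κ C) (hf : ∀ n, Measurable (f n))
    (hbound : ∀ n ω, |f n (X n ω)| ≤ (K : ℤ))
    (hV : Tendsto (fun N => VN μ X f N) atTop atTop) :
    ∀ r : ℕ, 1 ≤ r →
      ∃ (D : ℕ) (Cb : ℝ) (P : ℕ → ℕ → Polynomial ℝ) (δ₀ : ℝ),
        0 < δ₀ ∧
        (∀ b N, (P b N).natDegree ≤ D) ∧
        (∀ b N i, |(P b N).coeff i| ≤ Cb) ∧
        ∀ δ : ℝ, 0 < δ → δ ≤ δ₀ →
          ∀ ε > 0, ∃ N₀, ∀ N ≥ N₀, ∀ k : ℤ,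
            ‖(∫ t in (-δ)..δ, Complex.exp (-(Complex.I * (t : ℂ) * (k : ℂ))) *
                  ∫ ω, Complex.exp (Complex.I * (t : ℂ) * ((S X f N ω : ℤ) : ℂ)) ∂μ) -
                (((∑ b ∈ Finset.Icc 1 r, (sigN μ X f N)⁻¹ ^ b *
                    (P b N).eval (((k : ℝ) - meanS μ X f N) / sigN μ X f N) *
                    gaussDensity (((k : ℝ) - meanS μ X f N) / sigN μ X f N) : ℝ)) : ℂ)‖
              ≤ ε * (sigN μ X f N)⁻¹ ^ r := by
  intro r _
  have hμ := hchain.1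
  obtain ⟨ρ, A, hρ, hA, hA1, hq⟩ := exists_mgf_expansion hchain hC hK hf hbound
  choose! q hqd hqb hqe using hq
  obtain ⟨D, Cb, hCb, hbd⟩ := exists_edgePoly_bounds r A
  choose Pre hPdeg hPco hPev using exists_polynomial_re
  classical
  set P : ℕ → ℕ → Polynomial ℝ := fun b N =>
    if 0 < VN μ X f N ∧ 1 ≤ b ∧ b ≤ r then Pre (edgePoly (q N) (b - 1)) else 0 with hP
  refine ⟨D, Cb, P, min (ρ / 2) (1 / (4 * A)), by positivity, fun b N => ?_, fun b N i => ?_,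
    fun δ hδ hδ₀ ε hε => ?_⟩
  · simp only [hP]
    split_ifs with hb
    · exact (hPdeg _).trans (hbd (q N) ρ hρ hA hA1 (hqd N hb.1) (hqb N hb.1) (b - 1) (by omega)).1
    · simp
  · simp only [hP]
    split_ifs with hb
    · exact (hPco _ i).trans
        ((hbd (q N) ρ hρ hA hA1 (hqd N hb.1) (hqb N hb.1) (b - 1) (by omega)).2 i)
    · simpa using hCb
  set M : ℝ := (((r + 1) * A ^ r + r * r * A ^ r / δ ^ r) *
    ∫ u : ℝ, (1 + |u|) ^ (5 * r) * Real.exp (-(1 / 4) * u ^ 2)) with hM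
  have hσ : Tendsto (fun N => sigN μ X f N) atTop atTop := Real.tendsto_sqrt_atTop.comp hV
  obtain ⟨N₀, hN₀⟩ := eventually_atTop.1 (hσ.eventually_ge_atTop (max 1 (M / ε)))
  refine ⟨N₀, fun N hN k => ?_⟩
  have hσ1 : 1 ≤ sigN μ X f N := (le_max_left _ _).trans (hN₀ N hN)
  have hσM : M / ε ≤ sigN μ X f N := (le_max_right _ _).trans (hN₀ N hN)
  have hσ0 : 0 < sigN μ X f N := by linarith
  have hVpos : 0 < VN μ X f N := Real.sqrt_pos.1 hσ0
  have hσsq : sigN μ X f N ^ 2 = VN μ X f N := Real.sq_sqrt hVpos.le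
  have hmain := edgeworth_integral hρ hA hA1 (hqd N hVpos) (hqb N hVpos) r hδ
    (lt_of_le_of_lt (hδ₀.trans (min_le_left _ _)) (by linarith)) (hδ₀.trans (min_le_right _ _)) hσ1
    (((k : ℝ) - meanS μ X f N) / sigN μ X f N)
  set σ := sigN μ X f N
  set x := ((k : ℝ) - meanS μ X f N) / σ with hx
  have hσx : σ * x = (k : ℝ) - meanS μ X f N := by rw [hx]; field_simp
  have hI : (∫ t in (-δ)..δ, Complex.exp (-(Complex.I * (t : ℂ) * (k : ℂ))) *
        ∫ ω, Complex.exp (Complex.I * (t : ℂ) * ((S X f N ω : ℤ) : ℂ)) ∂μ)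
      = ∫ t in (-δ)..δ, Complex.exp (-(Complex.I * t * (σ * x : ℝ))) *
        Complex.exp (σ ^ 2 * (Complex.I * t) ^ 2 / 2
          + σ ^ 2 * (Complex.I * t) ^ 3 * q N (Complex.I * t)) := by
    refine intervalIntegral.integral_congr fun t ht => ?_
    rw [Set.uIcc_of_le (by linarith)] at ht
    have ht' : Complex.I * (t : ℂ) ∈ Metric.ball (0 : ℂ) ρ := by
      have h1 : |t| ≤ δ := abs_le.2 ht
      have h2 : δ ≤ ρ / 2 := hδ₀.trans (min_le_left _ _)
      rw [mem_ball_zero_iff, norm_mul, Complex.norm_I, one_mul, Complex.norm_real,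
        Real.norm_eq_abs]
      linarith
    have h1 := hqe N hVpos _ ht'
    rw [← hσsq, Complex.ofReal_pow] at h1
    rw [← h1, hσx, ← integral_const_mul, ← integral_const_mul]
    refine integral_congr_ae (Eventually.of_forall fun ω => ?_)
    simp only
    rw [← Complex.exp_add, ← Complex.exp_add]
    congr 1
    push_cast
    ring
  have hJ : ∑ b ∈ Finset.Icc 1 r, σ⁻¹ ^ b * (P b N).eval x * gaussDensity x
      = (∑ b ∈ range r, (σ⁻¹ : ℂ) ^ (b + 1) * (edgePoly (q N) b).eval (x : ℂ)
          * gaussDensity x).re := by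
    rw [Complex.re_sum, ← tailSum_zero_eq_sum_Icc, tailSum_eq_sum]
    refine Finset.sum_congr rfl fun b hb => ?_
    rw [Finset.mem_range] at hb
    simp only [hP]
    rw [if_pos ⟨hVpos, by omega, by omega⟩, hPev, Complex.re_mul_ofReal, ← Complex.ofReal_inv,
      ← Complex.ofReal_pow, Complex.re_ofReal_mul]
    simp [add_comm]
  have hherm : starRingEnd ℂ (∫ t in (-δ)..δ, Complex.exp (-(Complex.I * (t : ℂ) * (k : ℂ))) *
        ∫ ω, Complex.exp (Complex.I * (t : ℂ) * ((S X f N ω : ℤ) : ℂ)) ∂μ)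
      = ∫ t in (-δ)..δ, Complex.exp (-(Complex.I * (t : ℂ) * (k : ℂ))) *
        ∫ ω, Complex.exp (Complex.I * (t : ℂ) * ((S X f N ω : ℤ) : ℂ)) ∂μ := by
    refine conj_integral_of_hermitian (fun t => ?_) δ
    rw [map_mul, ← integral_conj, ← Complex.exp_conj]
    simp_rw [← Complex.exp_conj]
    simp
  rw [hJ]
  refine (norm_sub_re_le hherm).trans ?_
  rw [hI]
  refine hmain.trans ?_
  rw [← hM, pow_succ, mul_comm (σ⁻¹ ^ r), ← mul_assoc]
  refine mul_le_mul_of_nonneg_right ?_ (by positivity)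
  rw [← div_eq_mul_inv, div_le_iff₀ hσ0, mul_comm, ← div_le_iff₀ hε]
  exact hσM

end EdgeworthMC
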